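/- arXiv:0907.2865 — 4 statements merged into one kernel-verified Lean document; each statement's English description precedes it below -/
import Mathlib

section
/- Let k ≥ 2, let 1 ≤ t_1 ≤ t_2 ≤ … ≤ t_k = t be integers whose greatest common divisor equals 1, let F be a field of characteristic 0, and let a_{t_1}, a_{t_2}, …, a_{t_k} be algebraically independent variables over F. Then the Galois group of the polynomial f(x) = x^t + Σ_{i=1}^{k} a_{t_i} x^{t−t_i} over the rational function field F(a_{t_1}, a_{t_2}, …, a_{t_k}) is isomorphic to the symmetric group Sym(t) of degree t. -/
open scoped BigOperators

section

open Polynomial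

theorem exists_derivation_fractionRing {F σ K M : Type*} [Field F] [CharZero F] [Field K]
    [Algebra (MvPolynomial σ F) K] [IsFractionRing (MvPolynomial σ F) K] [Field M]
    [Algebra K M] [Algebra.IsAlgebraic K M] [Algebra F M] [Algebra (MvPolynomial σ F) M]
    [IsScalarTower (MvPolynomial σ F) K M] [IsScalarTower F (MvPolynomial σ F) M] (i : σ)
    [DecidableEq σ] :
    ∃ D : Derivation F M M, ∀ j, D (algebraMap (MvPolynomial σ F) M (MvPolynomial.X j)) =
      if j = i then 1 else 0 := by
  have : CharZero (MvPolynomial σ F) :=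
    charZero_of_injective_algebraMap (algebraMap F (MvPolynomial σ F)).injective
  have : CharZero K :=
    charZero_of_injective_algebraMap (IsFractionRing.injective (MvPolynomial σ F) K)
  have : Algebra.FormallyEtale (MvPolynomial σ F) K :=
    Algebra.FormallyEtale.of_isLocalization (nonZeroDivisors (MvPolynomial σ F))
  have : Algebra.FormallyEtale K M := Algebra.FormallyEtale.of_isSeparable K M
  have : Algebra.FormallyEtale (MvPolynomial σ F) M := .comp _ K _
  let d : Derivation F (MvPolynomial σ F) M :=
    (MvPolynomial.mkDerivation F fun j => if j = i then (1 : M) else 0)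
  let l : TensorProduct (MvPolynomial σ F) M (KaehlerDifferential F (MvPolynomial σ F)) →ₗ[M] M :=
    d.liftKaehlerDifferential.liftBaseChange M
  refine ⟨(l ∘ₗ (KaehlerDifferential.tensorKaehlerEquivOfFormallyEtale F
    (MvPolynomial σ F) M).symm.toLinearMap).compDer (KaehlerDifferential.D F M), fun j => ?_⟩
  have := KaehlerDifferential.tensorKaehlerEquivOfFormallyEtale_symm_D_algebraMap F
    (MvPolynomial σ F) M (MvPolynomial.X j)
  simp [this, l, d, MvPolynomial.mkDerivation_X]

/-- The polynomial `x ^ t + ∑ i, a i * x ^ (t - e i)`. -/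
noncomputable def sparsePoly {ι R : Type*} [Fintype ι] [CommRing R] (t : ℕ) (e : ι → ℕ)
    (a : ι → R) : R[X] :=
  X ^ t + ∑ i, C (a i) * X ^ (t - e i)

namespace sparsePoly

variable {ι R S : Type*} [Fintype ι] [CommRing R] [CommRing S] {t : ℕ} {e : ι → ℕ}

theorem map (φ : R →+* S) (a : ι → R) :
    (sparsePoly t e a).map φ = sparsePoly t e (fun i => φ (a i)) := by
  simp [sparsePoly, Polynomial.map_sum]

theorem eval (a : ι → R) (x : R) :
    (sparsePoly t e a).eval x = x ^ t + ∑ i, a i * x ^ (t - e i) := by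
  simp [sparsePoly, eval_finsetSum]

theorem degree_sum_lt (he : ∀ i, 0 < e i) (ht : 0 < t) (a : ι → R) :
    (∑ i, C (a i) * X ^ (t - e i)).degree < (t : WithBot ℕ) := by
  refine (degree_sum_le _ _).trans_lt ((Finset.sup_lt_iff (WithBot.bot_lt_coe t)).2 fun i _ => ?_)
  refine (degree_C_mul_X_pow_le _ _).trans_lt ?_
  exact WithBot.coe_lt_coe.2 (Nat.sub_lt ht (he i))

theorem monic (he : ∀ i, 0 < e i) (ht : 0 < t) (a : ι → R) : (sparsePoly t e a).Monic :=
  monic_X_pow_add (degree_sum_lt he ht a)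

theorem natDegree [Nontrivial R] (he : ∀ i, 0 < e i) (ht : 0 < t) (a : ι → R) :
    (sparsePoly t e a).natDegree = t := by
  refine natDegree_eq_of_degree_eq_some ?_
  rw [sparsePoly, degree_add_eq_left_of_degree_lt] <;> rw [degree_X_pow]
  exact degree_sum_lt he ht a

end sparsePoly

theorem eq_of_pow_eq_pow_of_gcd_eq_one {M ι : Type*} [Field M] {s : Finset ι} {t : ℕ} {e : ι → ℕ}
    (het : ∀ i ∈ s, e i ≤ t) (ht : t ≠ 0) (hgcd : s.gcd e = 1) {x y : M} (hxy : x ^ t = y ^ t)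
    (h : ∀ i ∈ s, x ^ (t - e i) = y ^ (t - e i)) : x = y := by
  rcases eq_or_ne y 0 with rfl | hy
  · rw [zero_pow ht] at hxy
    exact eq_zero_of_pow_eq_zero hxy
  have hz {n : ℕ} (hn : x ^ n = y ^ n) : orderOf (x / y) ∣ n :=
    orderOf_dvd_of_pow_eq_one (by rw [div_pow, hn, div_self (pow_ne_zero _ hy)])
  have h1 : orderOf (x / y) ∣ s.gcd e := Finset.dvd_gcd fun i hi =>
    (Nat.dvd_sub_iff_right (het i hi) (hz hxy)).1 (hz (h i hi))
  rw [hgcd, Nat.dvd_one, orderOf_eq_one_iff, div_eq_one_iff_eq hy] at h1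
  exact h1

section Derivation

variable {F M ι : Type*} [Field F] [Field M] [Algebra F M] [Fintype ι] [DecidableEq ι]
  {t : ℕ} {e : ι → ℕ} {a : ι → M}

theorem Derivation.eval_sparsePoly {i : ι} {D : Derivation F M M}
    (hD : ∀ j, D (a j) = if j = i then 1 else 0) (x : M) :
    D ((sparsePoly t e a).eval x) =
      (derivative (sparsePoly t e a)).eval x * D x + x ^ (t - e i) := by
  simp [sparsePoly, hD, Derivation.leibniz_pow, Finset.sum_add_distrib, Finset.sum_mul, add_mul,
    mul_assoc, add_assoc, derivative_X_pow, eval_finsetSum]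

theorem Derivation.eval_derivative_sparsePoly {i : ι} {D : Derivation F M M}
    (hD : ∀ j, D (a j) = if j = i then 1 else 0) (x : M) :
    D ((derivative (sparsePoly t e a)).eval x) =
      (derivative (derivative (sparsePoly t e a))).eval x * D x +
        (t - e i : ℕ) * x ^ (t - e i - 1) := by
  simp [sparsePoly, hD, Derivation.leibniz_pow, Finset.sum_add_distrib, Finset.sum_mul, add_mul,
    mul_assoc, add_assoc, derivative_X_pow, eval_finsetSum]

/-- Roots are simple as soon as the constant coefficient is a variable. -/
theorem eval_derivative_sparsePoly_ne_zero {l : ι} (hl : e l = t) {D : Derivation F M M}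
    (hD : ∀ j, D (a j) = if j = l then 1 else 0) {x : M} (hx : (sparsePoly t e a).eval x = 0) :
    (derivative (sparsePoly t e a)).eval x ≠ 0 := by
  intro h
  have := D.eval_sparsePoly (t := t) (e := e) hD x
  simp [hx, h, hl] at this

variable (het : ∀ i, e i ≤ t) (ht : t ≠ 0) (hgcd : Finset.univ.gcd e = 1)
  (hD : ∀ i, ∃ D : Derivation F M M, ∀ j, D (a j) = if j = i then 1 else 0)

include het ht hgcd hD in
/-- Distinct critical points have distinct critical values. -/
theorem eq_of_critical_value_sparsePoly_eq {x y : M}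
    (hx : (derivative (sparsePoly t e a)).eval x = 0)
    (hy : (derivative (sparsePoly t e a)).eval y = 0)
    (hxy : (sparsePoly t e a).eval x = (sparsePoly t e a).eval y) : x = y := by
  have h i : x ^ (t - e i) = y ^ (t - e i) := by
    obtain ⟨D, hD⟩ := hD i
    have h1 := D.eval_sparsePoly (t := t) (e := e) hD x
    have h2 := D.eval_sparsePoly (t := t) (e := e) hD y
    rw [hx, zero_mul, zero_add] at h1
    rw [hy, zero_mul, zero_add] at h2
    rw [← h1, ← h2, hxy]
  refine eq_of_pow_eq_pow_of_gcd_eq_one (fun i _ => het i) ht hgcd ?_ fun i _ => h i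
  simpa [sparsePoly.eval, h] using hxy

include het ht hgcd hD in
/-- Powers of two distinct roots are distinct. -/
theorem pow_ne_pow_of_eval_sparsePoly_eq_zero [CharZero M] {l : ι} (hl : e l = t) {x y : M}
    (hx : (sparsePoly t e a).eval x = 0) (hy : (sparsePoly t e a).eval y = 0)
    (hxy : x ≠ y) {n : ℕ} (hn : n ≠ 0) : x ^ n ≠ y ^ n := by
  obtain ⟨Dl, hDl⟩ := hD l
  have key (D : Derivation F M M) {z : M} {i : ι} (hD : ∀ j, D (a j) = if j = i then 1 else 0)
      (hz : (sparsePoly t e a).eval z = 0) :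
      (derivative (sparsePoly t e a)).eval z * D z + z ^ (t - e i) = 0 := by
    rw [← D.eval_sparsePoly hD, hz, map_zero]
  have hne {z : M} (hz : (sparsePoly t e a).eval z = 0) : z ≠ 0 := by
    rintro rfl
    simpa [hl] using key Dl hDl hz
  intro h
  refine hxy (eq_of_pow_eq_pow_of_gcd_eq_one (fun i _ => het i) ht hgcd ?_ ?_)
  all_goals
    have hlog (D : Derivation F M M) : D x * y = D y * x := by
      have h1 := congrArg D h
      simp only [Derivation.leibniz_pow, smul_eq_mul, nsmul_eq_mul] at h1
      have h2 : (n : M) * x ^ (n - 1) ≠ 0 :=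
        mul_ne_zero (Nat.cast_ne_zero.2 hn) (pow_ne_zero _ (hne hx))
      have hx' : x ^ n = x ^ (n - 1) * x := (pow_sub_one_mul hn x).symm
      have hy' : y ^ n = y ^ (n - 1) * y := (pow_sub_one_mul hn y).symm
      rw [hx', hy'] at h
      refine mul_left_cancel₀ h2 ?_
      linear_combination y * h1 - n * D y * h
    have hpow i : x ^ (t - e i) = y ^ (t - e i) := by
      obtain ⟨D, hDi⟩ := hD i
      have h1 := key D hDi hx
      have h2 := key D hDi hy
      have h3 := key Dl hDl hx
      have h4 := key Dl hDl hy
      rw [hl, Nat.sub_self, pow_zero] at h3 h4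
      have h5 : D x = x ^ (t - e i) * Dl x := by
        linear_combination D x * h3 - Dl x * h1
      have h6 : D y = y ^ (t - e i) * Dl y := by
        linear_combination D y * h4 - Dl y * h2
      have hDx : Dl x ≠ 0 := fun h => by simp [h] at h3
      have h7 := hlog D
      rw [h5, h6] at h7
      refine mul_right_cancel₀ (mul_ne_zero hDx (hne hy)) ?_
      linear_combination h7 - y ^ (t - e i) * hlog Dl
  · simpa [sparsePoly.eval, hpow] using hx.trans hy.symm
  · exact fun i _ => hpow i

include hD in
/-- Nonzero critical points are nondegenerate. -/
theorem eval_derivative_derivative_sparsePoly_ne_zero [CharZero M] {i : ι} (hi : e i < t) {x : M}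
    (hx : (derivative (sparsePoly t e a)).eval x = 0) (hx0 : x ≠ 0) :
    (derivative (derivative (sparsePoly t e a))).eval x ≠ 0 := by
  obtain ⟨D, hD⟩ := hD i
  intro h
  have := D.eval_derivative_sparsePoly (t := t) (e := e) hD x
  simp [hx, h, Nat.sub_eq_zero_iff_le, hx0, hi.not_ge] at this

end Derivation

theorem exists_algEquiv_of_isTranscendenceBasis {F M ι : Type*} [Field F] [Field M] [Algebra F M]
    [IsAlgClosed M] {v w : ι → M} (hv : IsTranscendenceBasis F v) (hw : IsTranscendenceBasis F w) :
    ∃ σ : M ≃ₐ[F] M, ∀ i, σ (v i) = w i := by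
  have := IsAlgClosed.isAlgClosure_of_transcendence_basis v hv
  have := IsAlgClosed.isAlgClosure_of_transcendence_basis w hw
  let ε : Algebra.adjoin F (Set.range v) ≃ₐ[F] Algebra.adjoin F (Set.range w) :=
    hv.1.aevalEquiv.symm.trans hw.1.aevalEquiv
  refine ⟨AlgEquiv.ofRingEquiv (f := IsAlgClosure.equivOfEquiv M M ε.toRingEquiv) fun r => ?_,
    fun i => ?_⟩
  · have := IsAlgClosure.equivOfEquiv_algebraMap M M ε.toRingEquiv (algebraMap F _ r)
    simpa [← IsScalarTower.algebraMap_apply] using this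
  · have := IsAlgClosure.equivOfEquiv_algebraMap M M ε.toRingEquiv
      (hv.1.aevalEquiv (MvPolynomial.X i))
    rw [hv.1.algebraMap_aevalEquiv, MvPolynomial.aeval_X] at this
    refine this.trans ?_
    simp only [AlgEquiv.coe_ringEquiv, ε, AlgEquiv.trans_apply,
      AlgEquiv.symm_apply_apply, hw.1.algebraMap_aevalEquiv, MvPolynomial.aeval_X]

theorem eq_zero_of_sum_mul_pow_eq_zero {M ι : Type*} [Field M] [Fintype ι] {t : ℕ} {e : ι → ℕ}
    {l s : ι} (hl : e l = t) {d : ι → M} (hd : ∀ i, i ≠ s → i ≠ l → d i = 0)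
    {x y : M} (hxy : x ^ (t - e s) ≠ y ^ (t - e s)) (hx : ∑ i, d i * x ^ (t - e i) = 0)
    (hy : ∑ i, d i * y ^ (t - e i) = 0) : d = 0 := by
  classical
  have hsl : s ≠ l := by
    rintro rfl
    simp [hl] at hxy
  have h z : ∑ i, d i * z ^ (t - e i) = d s * z ^ (t - e s) + d l := by
    rw [← Finset.sum_subset (Finset.subset_univ {s, l}), Finset.sum_pair hsl, hl]
    · simp
    · intro i _ hi
      simp only [Finset.mem_insert, Finset.mem_singleton, not_or] at hi
      rw [hd i hi.1 hi.2, zero_mul]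
  rw [h] at hx hy
  have hs : d s = 0 := by
    refine (mul_eq_zero.1 (?_ : d s * (x ^ (t - e s) - y ^ (t - e s)) = 0)).resolve_right
      (sub_ne_zero.2 hxy)
    linear_combination hx - hy
  have hl' : d l = 0 := by simpa [hs] using hx
  ext i
  by_cases h1 : i = s
  · simp [h1, hs]
  · by_cases h2 : i = l
    · simp [h2, hl']
    · exact hd i h1 h2

theorem isTranscendenceBasis_update_update {F M ι : Type*} [Field F] [Field M] [Algebra F M]
    [Fintype ι] [DecidableEq ι] {t : ℕ} {e : ι → ℕ} {a : ι → M} (ha : IsTranscendenceBasis F a)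
    {l s : ι} (hl : e l = t) {x y : M} (hxy : x ^ (t - e s) ≠ y ^ (t - e s))
    (hx : (sparsePoly t e a).eval x = 0) (hy : (sparsePoly t e a).eval y = 0) :
    IsTranscendenceBasis F (Function.update (Function.update a l x) s y) := by
  set v := Function.update (Function.update a l x) s y with hv
  have hsl : s ≠ l := by
    rintro rfl
    simp [hl] at hxy
  set S := Algebra.adjoin F (Set.range v)
  let T := Subalgebra.algebraicClosure S M
  have hvT i : v i ∈ T :=
    isAlgebraic_algebraMap (⟨v i, Algebra.subset_adjoin ⟨i, rfl⟩⟩ : S)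
  have hxT : x ∈ T := by simpa [hv, hsl.symm] using hvT l
  have hyT : y ∈ T := by simpa [hv] using hvT s
  have haT i (h1 : i ≠ s) (h2 : i ≠ l) : a i ∈ T := by simpa [hv, h1, h2] using hvT i
  rw [sparsePoly.eval] at hx hy
  have has : a s ∈ T := by
    have : a s = -(x ^ t - y ^ t + ∑ i ∈ Finset.univ.erase s,
        a i * (x ^ (t - e i) - y ^ (t - e i))) * (x ^ (t - e s) - y ^ (t - e s))⁻¹ := by
      rw [eq_mul_inv_iff_mul_eq₀ (sub_ne_zero.2 hxy)]
      rw [← Finset.add_sum_erase _ _ (Finset.mem_univ s)] at hx hy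
      simp only [mul_sub, Finset.sum_sub_distrib]
      linear_combination hx - hy
    rw [this]
    refine T.mul_mem (T.neg_mem (T.add_mem (T.sub_mem (T.pow_mem hxT _) (T.pow_mem hyT _))
      (T.sum_mem fun i hi => ?_)))
      (IsAlgebraic.inv (T.sub_mem (T.pow_mem hxT _) (T.pow_mem hyT _)))
    by_cases h : i = l
    · simp [h, hl, T.zero_mem]
    · exact T.mul_mem (haT i (Finset.ne_of_mem_erase hi) h)
        (T.sub_mem (T.pow_mem hxT _) (T.pow_mem hyT _))
  have hal : a l ∈ T := by
    have : a l = -(x ^ t + ∑ i ∈ Finset.univ.erase l, a i * x ^ (t - e i)) := by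
      rw [← Finset.add_sum_erase _ _ (Finset.mem_univ l), hl, Nat.sub_self, pow_zero] at hx
      linear_combination hx
    rw [this]
    refine T.neg_mem (T.add_mem (T.pow_mem hxT _) (T.sum_mem fun i hi => T.mul_mem ?_
      (T.pow_mem hxT _)))
    by_cases h : i = s
    · exact h ▸ has
    · exact haT i h (Finset.ne_of_mem_erase hi)
  have : Algebra.IsAlgebraic S M := by
    refine (IsTranscendenceBasis.isAlgebraic_iff (S := S) ha).2 fun i => ?_
    by_cases h1 : i = s
    · exact h1 ▸ has
    · by_cases h2 : i = l
      · exact h2 ▸ hal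
      · exact haT i h1 h2
  exact Algebra.IsAlgebraic.isTranscendenceBasis_of_lift_le_trdeg_of_finite F v
    ha.lift_cardinalMk_eq_trdeg.le

/-- Any two distinct roots can be moved to any two distinct roots. -/
theorem exists_algEquiv_apply_eq_of_eval_sparsePoly_eq_zero {F M ι : Type*} [Field F] [Field M]
    [Algebra F M] [IsAlgClosed M] [Fintype ι] {t : ℕ} {e : ι → ℕ} {a : ι → M}
    (ha : IsTranscendenceBasis F a) {l s : ι} (hl : e l = t) {x y x' y' : M}
    (hxy : x ^ (t - e s) ≠ y ^ (t - e s)) (hxy' : x' ^ (t - e s) ≠ y' ^ (t - e s))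
    (hx : (sparsePoly t e a).eval x = 0) (hy : (sparsePoly t e a).eval y = 0)
    (hx' : (sparsePoly t e a).eval x' = 0) (hy' : (sparsePoly t e a).eval y' = 0) :
    ∃ σ : M ≃ₐ[F] M, (∀ i, σ (a i) = a i) ∧ σ x = x' ∧ σ y = y' := by
  classical
  obtain ⟨σ, hσ⟩ := exists_algEquiv_of_isTranscendenceBasis
    (isTranscendenceBasis_update_update ha hl hxy hx hy)
    (isTranscendenceBasis_update_update ha hl hxy' hx' hy')
  have hsl : s ≠ l := by
    rintro rfl
    simp [hl] at hxy
  have hσx : σ x = x' := by simpa [hsl.symm] using hσ l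
  have hσy : σ y = y' := by simpa using hσ s
  refine ⟨σ, ?_, hσx, hσy⟩
  have key {z z' : M} (hz : (sparsePoly t e a).eval z = 0) (hz' : (sparsePoly t e a).eval z' = 0)
      (h : σ z = z') : ∑ i, (σ (a i) - a i) * z' ^ (t - e i) = 0 := by
    have h1 := congrArg σ hz
    rw [sparsePoly.eval] at hz' h1
    simp only [map_add, map_pow, map_sum, map_mul, map_zero, h] at h1
    simp only [sub_mul, Finset.sum_sub_distrib]
    linear_combination h1 - hz'
  have := eq_zero_of_sum_mul_pow_eq_zero hl (d := fun i => σ (a i) - a i)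
    (fun i h1 h2 => by simpa [h1, h2, sub_eq_zero] using hσ i) hxy' (key hx hx' hσx)
    (key hy hy' hσy)
  exact fun i => sub_eq_zero.1 (congrFun this i)

section CriticalPoint

variable {F M ι : Type*} [Field F] [Field M] [Algebra F M] [Fintype ι] [DecidableEq ι]
  [IsAlgClosed M] [CharZero M] {t : ℕ} {e : ι → ℕ} {a : ι → M}

theorem exists_eval_derivative_sparsePoly_eq_zero (he : ∀ i, 0 < e i) {s : ι} (hs : e s < t)
    (hD : ∃ D : Derivation F M M, ∀ j, D (a j) = if j = s then 1 else 0) :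
    ∃ β, β ≠ 0 ∧ (derivative (sparsePoly t e a)).eval β = 0 := by
  have ht : 0 < t := (he s).trans hs
  by_contra! h
  set p := derivative (sparsePoly t e a) with hp
  have hpt : p.natDegree = t - 1 := by rw [hp, natDegree_derivative, sparsePoly.natDegree he ht]
  have hp0 : p ≠ 0 := by
    intro h0
    exact h 1 one_ne_zero (by simp [h0])
  obtain ⟨q, hq, hq0⟩ := exists_eq_pow_rootMultiplicity_mul_and_not_dvd p hp0 0
  rw [C_0, sub_zero] at hq hq0
  have hqd : q.degree = 0 := by
    by_contra hqd
    obtain ⟨r, hr⟩ := IsAlgClosed.exists_root q hqd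
    refine h r ?_ ?_
    · rintro rfl
      exact hq0 (X_dvd_iff.2 (by rw [coeff_zero_eq_eval_zero, hr.eq_zero]))
    · rw [hq, eval_mul, hr.eq_zero, mul_zero]
  rw [eq_C_of_degree_eq_zero hqd, mul_comm] at hq
  have hqne : q.coeff 0 ≠ 0 := by rwa [Ne, ← X_dvd_iff]
  rw [hq, natDegree_C_mul_X_pow _ _ hqne] at hpt
  have hc := congrArg (coeff · (t - e s - 1)) hq
  have hes := he s
  simp only [hpt, coeff_C_mul_X_pow] at hc
  rw [if_neg (by omega), hp, coeff_derivative, mul_eq_zero] at hc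
  have h1 : t - e s - 1 + 1 = t - e s := by omega
  rw [h1] at hc
  have hc' := hc.resolve_right (Nat.cast_add_one_ne_zero _)
  obtain ⟨D, hD⟩ := hD
  have hcoeff : (sparsePoly t e a).coeff (t - e s) =
      ∑ i, if t - e s = t - e i then a i else 0 := by
    rw [sparsePoly, coeff_add, coeff_X_pow, if_neg (by omega), zero_add]
    simp [finsetSum_coeff, coeff_C_mul, coeff_X_pow]
  rw [hcoeff] at hc'
  have := congrArg D hc'
  simp [hD, ← Finset.sum_filter] at this

theorem card_le_card_roots_sparsePoly_sub_C (he : ∀ i, 0 < e i) (het : ∀ i, e i ≤ t)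
    {s : ι} (hs : e s < t)
    (hgcd : Finset.univ.gcd e = 1)
    (hD : ∀ i, ∃ D : Derivation F M M, ∀ j, D (a j) = if j = i then 1 else 0) {β : M} (hβ : β ≠ 0)
    (hβ' : (derivative (sparsePoly t e a)).eval β = 0) [DecidableEq M] :
    t ≤ (sparsePoly t e a - C ((sparsePoly t e a).eval β)).roots.toFinset.card + 1 := by
  have ht : 0 < t := (he s).trans hs
  set p := sparsePoly t e a - C ((sparsePoly t e a).eval β) with hp
  have hpt : p.natDegree = t := by rw [hp, natDegree_sub_C, sparsePoly.natDegree he ht]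
  have hp0 : p ≠ 0 := ne_zero_of_natDegree_gt (hpt.symm ▸ ht)
  have hp' : derivative p = derivative (sparsePoly t e a) := by simp [hp]
  have hcard : p.roots.card = t := by
    rw [← hpt]
    exact (IsAlgClosed.splits p).natDegree_eq_card_roots.symm
  have hnodup : (p.roots.erase β).Nodup := by
    rw [Multiset.nodup_iff_count_le_one]
    intro r
    by_cases hr : r = β
    · subst hr
      rw [Multiset.count_erase_self, count_roots]
      by_contra! hlt
      have := (lt_rootMultiplicity_iff_isRoot_iterate_derivative (t := r) (n := 2) hp0).1
        (by omega) 2 le_rfl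
      simp only [Function.iterate_succ, Function.iterate_zero, Function.comp, id, hp'] at this
      exact eval_derivative_derivative_sparsePoly_ne_zero hD hs hβ' hβ this
    · rw [Multiset.count_erase_of_ne hr, count_roots]
      by_contra! hlt
      obtain ⟨h1, h2⟩ := (one_lt_rootMultiplicity_iff_isRoot hp0).1 hlt
      rw [hp'] at h2
      exact hr (eq_of_critical_value_sparsePoly_eq het ht.ne' hgcd hD h2 hβ'
        (by simpa [hp, sub_eq_zero] using h1))
  rw [← hcard, ← Nat.sub_le_iff_le_add]
  have : p.roots.card - 1 ≤ (p.roots.erase β).card := by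
    rw [Multiset.card_erase_eq_ite, Nat.pred_eq_sub_one]
    split_ifs <;> omega
  refine this.trans ?_
  rw [← Multiset.toFinset_card_of_nodup hnodup]
  exact Finset.card_le_card (Multiset.toFinset_subset.2 (Multiset.erase_subset _ _))

end CriticalPoint

theorem exists_isSwap_of_card_roots {E N L : Type*} [Field E] [CharZero E] [Field N]
    [Algebra E[X] N] [IsFractionRing E[X] N] [Field L] [Algebra N L]
    (h : E[X]) (hm : h.Monic) {β : E} (hβ : (X - C β) ^ 2 ∣ h)
    [IsSplittingField N L ((h.map C + C X : E[X][X]).map (algebraMap E[X] N))]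
    [DecidableEq E] [DecidableEq L]
    (hcard : h.natDegree ≤ h.roots.toFinset.card + 1) :
    ∃ σ : L ≃ₐ[N] L,
      ∃ x ∈ ((h.map C + C X : E[X][X]).map (algebraMap E[X] N)).rootSet L,
      ∃ y ∈ ((h.map C + C X : E[X][X]).map (algebraMap E[X] N)).rootSet L, x ≠ y ∧
      ∀ z ∈ ((h.map C + C X : E[X][X]).map (algebraMap E[X] N)).rootSet L,
        σ z = Equiv.swap x y z := by
  classical
  let R := E[X]
  set H : R[X] := h.map C + C X with hH
  let : Algebra R L := ((algebraMap N L).comp (algebraMap R N)).toAlgebra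
  have : IsScalarTower R N L := .of_algebraMap_eq' rfl
  have : CharZero N := charZero_of_injective_algebraMap (IsFractionRing.injective R N)
  have : FiniteDimensional N L := IsSplittingField.finiteDimensional L (H.map (algebraMap R N))
  have : Normal N L := Normal.of_isSplittingField (H.map (algebraMap R N))
  have : IsGalois N L := ⟨⟩
  let B := integralClosure R L
  have : IsDedekindDomain B := integralClosure.isDedekindDomain R N L
  have : IsFractionRing B L := integralClosure.isFractionRing_of_finite_extension N L
  have : Module.Finite R B := IsIntegralClosure.finite R N L B
  have : IsGaloisGroup Gal(L/N) R B := IsGaloisGroup.of_isFractionRing _ _ _ N L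
  have : Module.IsTorsionFree R L := .trans_faithfulSMul R N L
  have : Module.Free R B := IsIntegralClosure.module_free R N L B
  have : Module.Flat R B := Module.Flat.of_free
  let p : Ideal R := Ideal.span {X}
  have : p.IsPrime := (Ideal.span_singleton_prime X_ne_zero).2 prime_X
  have : CharZero p.ResidueField :=
    charZero_of_injective_ringHom ((algebraMap R p.ResidueField).comp C).injective
  have : PerfectField p.ResidueField := inferInstance
  obtain ⟨⟨P, hP, hPp⟩⟩ := p.nonempty_primesOver (S := B)
  have hin : Nat.card (P.inertia Gal(L/N)) = P.ramificationIdx R := by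
    rw [Ideal.card_inertia_eq_ramificationIdxIn p P,
      Ideal.ramificationIdxIn_eq_ramificationIdx p P Gal(L/N)]
  have hHm : H.Monic := (hm.map C).add_of_left (by
    refine degree_C_le.trans_lt (natDegree_pos_iff_degree_pos.1 ?_)
    rw [natDegree_map]
    have := natDegree_le_of_dvd hβ hm.ne_zero
    rw [natDegree_pow, natDegree_X_sub_C] at this
    omega)
  have hHsplit : (H.map (algebraMap R B)).Splits := by
    have := IsSplittingField.splits L (H.map (algebraMap R N))
    rw [map_map, ← IsScalarTower.algebraMap_eq R N L, IsScalarTower.algebraMap_eq R B L,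
      ← map_map] at this
    refine this.of_splits_map_of_injective (FaithfulSMul.algebraMap_injective B L) fun r hr => ?_
    have hr' : IsIntegral R r := by
      refine ⟨H, hHm, ?_⟩
      rw [map_map, ← IsScalarTower.algebraMap_eq R B L, mem_roots', IsRoot.def, eval_map] at hr
      exact hr.2
    exact ⟨⟨r, hr'⟩, rfl⟩
  let ψ : E →+* B ⧸ P := (algebraMap R (B ⧸ P)).comp C
  have hX : (X : R) ∈ p := Ideal.mem_span_singleton_self X
  have hXP : algebraMap R (B ⧸ P) X = 0 := by
    rw [IsScalarTower.algebraMap_apply R B (B ⧸ P), Ideal.Quotient.algebraMap_eq,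
      Ideal.Quotient.eq_zero_iff_mem]
    have := hX
    rwa [Ideal.over_def P p] at this
  have hHP : H.map (algebraMap R (B ⧸ P)) = h.map ψ := by
    rw [hH, Polynomial.map_add, map_map, map_C, hXP, C_0, add_zero]
  have hHP0 : H.map (algebraMap R (B ⧸ P)) ≠ 0 := (hHm.map _).ne_zero
  have hmem x (hx : h.IsRoot x) : ψ x ∈ H.rootSet (B ⧸ P) := by
    rw [mem_rootSet']
    refine ⟨hHP0, ?_⟩
    rw [← eval_map_algebraMap, hHP, eval_map, eval₂_hom, hx.eq_zero, map_zero]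
  have hroots : (H.rootSet B).ncard ≤ (H.rootSet (B ⧸ P)).ncard + 1 := by
    refine le_trans ?_ (hcard.trans (Nat.add_le_add_right ?_ 1))
    · rw [rootSet_def, Set.ncard_coe_finset]
      refine (Multiset.toFinset_card_le _).trans ((card_roots' _).trans ?_)
      refine natDegree_map_le.trans ?_
      rw [hH, natDegree_add_C, natDegree_map]
    · rw [← Finset.card_image_of_injective _ ψ.injective, ← Set.ncard_coe_finset]
      refine Set.ncard_le_ncard (fun y hy => ?_) (H.rootSet_finite _)
      obtain ⟨x, hx, rfl⟩ := Finset.mem_image.1 hy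
      exact hmem x (isRoot_of_mem_roots (Multiset.mem_toFinset.1 hx))
  have hβP : ψ β ∈ H.rootSet (B ⧸ P) :=
    hmem β (dvd_iff_isRoot.1 ((dvd_pow_self _ two_ne_zero).trans hβ))
  rw [← hHsplit.image_rootSet_of_map_ne_zero (Ideal.Quotient.mkₐ R P) hHP0] at hβP
  obtain ⟨r, hr, hrβ⟩ := hβP
  have hXP2 : algebraMap R B X ∈ P ^ 2 := by
    obtain ⟨q, hq⟩ := hβ
    have hr0 := (mem_rootSet'.1 hr).2
    have hrP : r - algebraMap R B (C β) ∈ P := by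
      rw [← Ideal.Quotient.eq]
      exact hrβ
    have : algebraMap R B X = -((r - algebraMap R B (C β)) ^ 2 * aeval r (q.map C)) := by
      rw [hH, hq] at hr0
      simp only [Polynomial.map_mul, Polynomial.map_pow, Polynomial.map_sub, map_X, map_C, map_add,
        map_mul, map_pow, map_sub, aeval_X, aeval_C] at hr0
      linear_combination hr0
    rw [this]
    exact (P ^ 2).neg_mem (Ideal.mul_mem_right _ _ (Ideal.pow_mem_pow hrP 2))
  have hram : P.ramificationIdx R ≠ 1 := by
    rw [← Ideal.ramificationIdx'_eq_ramificationIdx p P (Ideal.span_singleton_eq_bot.not.2 X_ne_zero)]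
    rw [Ideal.ramificationIdx'_ne_one_iff]
    · simpa [p, Ideal.map_span, Ideal.span_le] using hXP2
    · rw [Ideal.map_le_iff_le_comap]
      exact (Ideal.over_def P p).le
  have : P.inertia Gal(L/N) ≠ ⊥ := by
    intro h0
    rw [h0, Subgroup.card_bot] at hin
    exact hram hin.symm
  obtain ⟨σ, hσ, hσ1⟩ := (Subgroup.bot_or_exists_ne_one _).resolve_left this
  have hlift (z : L) (hz : z ∈ (H.map (algebraMap R N)).rootSet L) :
      ∃ z' : H.rootSet B, ((z' : B) : L) = z := by
    rw [mem_rootSet', ← eval_map_algebraMap, map_map, ← IsScalarTower.algebraMap_eq R N L,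
      eval_map] at hz
    refine ⟨⟨⟨z, H, hHm, hz.2⟩, ?_⟩, rfl⟩
    rw [mem_rootSet']
    refine ⟨(hHm.map _).ne_zero, FaithfulSMul.algebraMap_injective B L ?_⟩
    rw [← aeval_algebraMap_apply, map_zero]
    exact hz.2
  have hcoe (z : H.rootSet B) : ((z : B) : L) ∈ (H.map (algebraMap R N)).rootSet L := by
    rw [mem_rootSet', ← eval_map_algebraMap, map_map, ← IsScalarTower.algebraMap_eq R N L]
    refine ⟨(hHm.map _).ne_zero, ?_⟩
    rw [eval_map_algebraMap]
    exact (aeval_algebraMap_apply L (z : B) H).trans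
      (by rw [(mem_rootSet'.1 z.2).2, map_zero])
  have hσsmul (z : H.rootSet B) : σ ((z : B) : L) = (((σ • z : H.rootSet B) : B) : L) := rfl
  have hsplit := IsSplittingField.adjoin_rootSet L (H.map (algebraMap R N))
  rcases hHsplit.toPermHom_apply_eq_one_or_isSwap_of_ncard_le_of_mem_inertia P hroots σ hσ with
    h1 | ⟨x, y, hxy, hswap⟩
  · refine absurd (AlgEquiv.coe_toAlgHom_injective (AlgHom.ext_of_adjoin_eq_top hsplit ?_)) hσ1
    intro z hz
    obtain ⟨z, rfl⟩ := hlift z hz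
    have := congr($h1 z)
    rw [MulAction.toPermHom_apply, MulAction.toPerm_apply, Equiv.Perm.one_apply] at this
    exact (hσsmul z).trans (by rw [this]; rfl)
  · refine ⟨σ, ((x : B) : L), hcoe x, ((y : B) : L), hcoe y,
      fun h => hxy (Subtype.ext (Subtype.ext h)), ?_⟩
    intro z hz
    obtain ⟨z, rfl⟩ := hlift z hz
    have := congr($hswap z)
    rw [MulAction.toPermHom_apply, MulAction.toPerm_apply] at this
    rw [hσsmul z, this]
    exact (Subtype.val_injective.comp Subtype.val_injective).map_swap
      (f := fun z : H.rootSet B => ((z : B) : L)) x y z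

theorem MulAction.toPermHom_surjective_of_swap {G α : Type*} [Group G] [MulAction G α] [Finite α]
    [DecidableEq α]
    (h : ∀ x y x' y' : α, x ≠ y → x' ≠ y' → ∃ g : G, g • x = x' ∧ g • y = y')
    {g : G} {x y : α} (hxy : x ≠ y) (hg : MulAction.toPermHom G α g = Equiv.swap x y) :
    Function.Surjective (MulAction.toPermHom G α) := by
  rw [← MonoidHom.range_eq_top, eq_top_iff, ← Equiv.Perm.closure_isSwap, Subgroup.closure_le]
  rintro _ ⟨x', y', hxy', rfl⟩
  obtain ⟨c, rfl, rfl⟩ := h x y x' y' hxy hxy'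
  refine ⟨c * g * c⁻¹, ?_⟩
  rw [map_mul, map_mul, map_inv, hg]
  exact (Equiv.swap_apply_apply (MulAction.toPermHom G α c) x y).symm

theorem Polynomial.Gal.galActionHom_surjective_of_swap {K E L : Type*} [Field K] [Field E]
    [Algebra K E] [Field L] [Algebra K L] [DecidableEq L] (f : K[X])
    [Fact (f.map (algebraMap K E)).Splits] [Fact (f.map (algebraMap K L)).Splits]
    (h : ∀ x ∈ f.rootSet E, ∀ y ∈ f.rootSet E, ∀ x' ∈ f.rootSet E, ∀ y' ∈ f.rootSet E,
      x ≠ y → x' ≠ y' → ∃ σ : Gal(E/K), σ x = x' ∧ σ y = y')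
    {σ : Gal(L/K)} {x y : L} (hx : x ∈ f.rootSet L) (hy : y ∈ f.rootSet L) (hxy : x ≠ y)
    (hσ : ∀ z ∈ f.rootSet L, σ z = Equiv.swap x y z) :
    Function.Surjective (Polynomial.Gal.galActionHom f E) := by
  classical
  let ε : f.rootSet L ≃ f.rootSet E :=
    (Polynomial.Gal.rootsEquivRoots f L).symm.trans (Polynomial.Gal.rootsEquivRoots f E)
  have hε (g : f.Gal) (z : f.rootSet L) : ε (g • z) = g • ε z := by
    simp [ε, Polynomial.Gal.smul_def]
  refine MulAction.toPermHom_surjective_of_swap (G := f.Gal) (fun x y x' y' hxy hxy' => ?_)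
    (g := Polynomial.Gal.restrict f L σ) (x := ε ⟨x, hx⟩) (y := ε ⟨y, hy⟩)
    (fun h => hxy (congrArg Subtype.val (ε.injective h))) (Equiv.ext fun z => ?_)
  · obtain ⟨τ, hτ, hτ'⟩ := h x x.2 y y.2 x' x'.2 y' y'.2 (Subtype.coe_ne_coe.2 hxy)
      (Subtype.coe_ne_coe.2 hxy')
    exact ⟨Polynomial.Gal.restrict f E τ,
      Subtype.ext ((Polynomial.Gal.restrict_smul τ x).trans hτ),
      Subtype.ext ((Polynomial.Gal.restrict_smul τ y).trans hτ')⟩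
  · obtain ⟨z, rfl⟩ := ε.surjective z
    rw [MulAction.toPermHom_apply, MulAction.toPerm_apply, ← hε, ← ε.injective.map_swap]
    congr 1
    refine Subtype.ext ((Polynomial.Gal.restrict_smul σ z).trans ((hσ z z.2).trans ?_))
    exact (Subtype.val_injective.map_swap ⟨x, hx⟩ ⟨y, hy⟩ z).symm

theorem Polynomial.Gal.galActionHom_surjective_of_swap_map {K E N L : Type*} [Field K] [Field E]
    [Algebra K E] [Field N] [Field L] [Algebra N L] [DecidableEq L] (f : K[X]) (φ : K →+* N)
    {g : N[X]} (hg : f.map φ = g) [IsSplittingField N L g]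
    [Fact (f.map (algebraMap K E)).Splits]
    (h : ∀ x ∈ f.rootSet E, ∀ y ∈ f.rootSet E, ∀ x' ∈ f.rootSet E, ∀ y' ∈ f.rootSet E,
      x ≠ y → x' ≠ y' → ∃ σ : Gal(E/K), σ x = x' ∧ σ y = y')
    {σ : Gal(L/N)} {x y : L} (hx : x ∈ g.rootSet L) (hy : y ∈ g.rootSet L)
    (hxy : x ≠ y) (hσ : ∀ z ∈ g.rootSet L, σ z = Equiv.swap x y z) :
    Function.Surjective (Polynomial.Gal.galActionHom f E) := by
  subst hg
  let _ : Algebra K N := φ.toAlgebra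
  let _ : Algebra K L := ((algebraMap N L).comp φ).toAlgebra
  have : IsScalarTower K N L := .of_algebraMap_eq' rfl
  have hroot : (f.map φ).rootSet L = f.rootSet L := by
    rw [rootSet_def, rootSet_def, aroots_def, aroots_def, map_map]
    rfl
  have : Fact (f.map (algebraMap K L)).Splits := ⟨by
    have := IsSplittingField.splits L (f.map φ)
    rwa [map_map] at this⟩
  rw [hroot] at hx hy hσ
  exact Polynomial.Gal.galActionHom_surjective_of_swap f h (σ := σ.restrictScalars K) hx hy hxy hσ

theorem sparsePoly.map_sub_C_add_C_X {ι R : Type*} [Fintype ι] [DecidableEq ι] [CommRing R] {t : ℕ}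
    {e : ι → ℕ} {l : ι} (hl : e l = t) (a : ι → R) (v : R) :
    (sparsePoly t e a - C v).map C + C X =
      sparsePoly t e fun i => C (a i) + if i = l then X - C v else 0 := by
  simp [sparsePoly, Polynomial.map_sum, add_mul, Finset.sum_add_distrib, hl, apply_ite C, ite_mul]
  ring

section Generic

variable {F ι K M : Type*} [Field F] [Fintype ι] [DecidableEq ι] [Field K]
  [Algebra (MvPolynomial ι F) K] [IsFractionRing (MvPolynomial ι F) K] [Field M] [IsAlgClosed M]
  [Algebra K M] [Algebra.IsAlgebraic K M] [Algebra F M] [Algebra (MvPolynomial ι F) M]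
  [IsScalarTower (MvPolynomial ι F) K M] [IsScalarTower F (MvPolynomial ι F) M]
  {t : ℕ} {e : ι → ℕ}

variable (F ι K) in
/-- The polynomial whose `i`-th coefficient, in degree `t - e i`, is the variable `X i`. -/
noncomputable def genericSparsePoly (t : ℕ) (e : ι → ℕ) : K[X] :=
  sparsePoly t e fun i => algebraMap (MvPolynomial ι F) K (MvPolynomial.X i)

omit [DecidableEq ι] [IsFractionRing (MvPolynomial ι F) K] [IsAlgClosed M]
  [Algebra.IsAlgebraic K M] [Algebra F M] [IsScalarTower F (MvPolynomial ι F) M] in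
theorem genericSparsePoly_map_algebraMap :
    (genericSparsePoly F ι K t e).map (algebraMap K M) =
      sparsePoly t e fun i => algebraMap (MvPolynomial ι F) M (MvPolynomial.X i) := by
  rw [genericSparsePoly, sparsePoly.map]
  simp only [← IsScalarTower.algebraMap_apply]

omit [DecidableEq ι] [IsFractionRing (MvPolynomial ι F) K] [IsAlgClosed M]
  [Algebra.IsAlgebraic K M] [Algebra F M] [IsScalarTower F (MvPolynomial ι F) M] in
theorem eval_eq_zero_of_mem_rootSet_genericSparsePoly {x : M}
    (hx : x ∈ (genericSparsePoly F ι K t e).rootSet M) :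
    (sparsePoly t e fun i => algebraMap (MvPolynomial ι F) M (MvPolynomial.X i)).eval x = 0 := by
  rw [← genericSparsePoly_map_algebraMap (K := K), eval_map_algebraMap]
  exact (mem_rootSet'.1 hx).2

theorem exists_algEquiv_apply_eq_of_mem_rootSet_genericSparsePoly [CharZero F]
    (het : ∀ i, e i ≤ t) (hgcd : Finset.univ.gcd e = 1) {l s : ι} (hl : e l = t) (hs : e s < t)
    {x y x' y' : M}
    (hx : x ∈ (genericSparsePoly F ι K t e).rootSet M)
    (hy : y ∈ (genericSparsePoly F ι K t e).rootSet M)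
    (hx' : x' ∈ (genericSparsePoly F ι K t e).rootSet M)
    (hy' : y' ∈ (genericSparsePoly F ι K t e).rootSet M) (hxy : x ≠ y) (hxy' : x' ≠ y') :
    ∃ σ : Gal(M/K), σ x = x' ∧ σ y = y' := by
  have : CharZero M := charZero_of_injective_algebraMap (algebraMap F M).injective
  have : Algebra.IsAlgebraic (MvPolynomial ι F) M :=
    (IsFractionRing.comap_isAlgebraic_iff (K := K)).2 inferInstance
  have : FaithfulSMul (MvPolynomial ι F) M := (faithfulSMul_iff_algebraMap_injective _ _).2 (by
    rw [IsScalarTower.algebraMap_eq _ K M]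
    exact (algebraMap K M).injective.comp (IsFractionRing.injective _ K))
  have ha : IsTranscendenceBasis F fun i => algebraMap (MvPolynomial ι F) M (MvPolynomial.X i) :=
    (IsTranscendenceBasis.mvPolynomial ι F).algebraMap_comp
  have hD := exists_derivation_fractionRing (F := F) (σ := ι) (K := K) (M := M)
  have ht : t ≠ 0 := ((Nat.zero_le _).trans_lt hs).ne'
  replace hx := eval_eq_zero_of_mem_rootSet_genericSparsePoly hx
  replace hy := eval_eq_zero_of_mem_rootSet_genericSparsePoly hy
  replace hx' := eval_eq_zero_of_mem_rootSet_genericSparsePoly hx'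
  replace hy' := eval_eq_zero_of_mem_rootSet_genericSparsePoly hy'
  obtain ⟨σ, hσ, hσx, hσy⟩ := exists_algEquiv_apply_eq_of_eval_sparsePoly_eq_zero ha hl
    (pow_ne_pow_of_eval_sparsePoly_eq_zero het ht hgcd (fun i => hD i) hl hx hy hxy
      (Nat.sub_ne_zero_of_lt hs))
    (pow_ne_pow_of_eval_sparsePoly_eq_zero het ht hgcd (fun i => hD i) hl hx' hy' hxy'
      (Nat.sub_ne_zero_of_lt hs)) hx hy hx' hy'
  have hσA : ((σ : M →+* M).comp (algebraMap K M)) = algebraMap K M := by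
    refine IsLocalization.ringHom_ext (nonZeroDivisors (MvPolynomial ι F)) ?_
    refine MvPolynomial.ringHom_ext (fun r => ?_) fun i => ?_
    · simp only [RingHom.comp_apply, ← MvPolynomial.algebraMap_eq]
      rw [← IsScalarTower.algebraMap_apply (MvPolynomial ι F) K M,
        ← IsScalarTower.algebraMap_apply F (MvPolynomial ι F) M]
      exact σ.commutes r
    · simpa [← IsScalarTower.algebraMap_apply] using hσ i
  exact ⟨{ σ with commutes' := fun r => congr($hσA r) }, hσx, hσy⟩

theorem galActionHom_genericSparsePoly_surjective [CharZero F] (he : ∀ i, 0 < e i)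
    (het : ∀ i, e i ≤ t) (hgcd : Finset.univ.gcd e = 1) {l s : ι} (hl : e l = t) (hs : e s < t)
    [Fact ((genericSparsePoly F ι K t e).map (algebraMap K M)).Splits] :
    Function.Surjective (Polynomial.Gal.galActionHom (genericSparsePoly F ι K t e) M) := by
  classical
  have : CharZero M := charZero_of_injective_algebraMap (algebraMap F M).injective
  have ht : 0 < t := (he s).trans hs
  have hD := exists_derivation_fractionRing (F := F) (σ := ι) (K := K) (M := M)
  set a : ι → M := fun i => algebraMap (MvPolynomial ι F) M (MvPolynomial.X i) with ha
  obtain ⟨β, hβ, hβ'⟩ := exists_eval_derivative_sparsePoly_eq_zero (a := a) he hs (hD s)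
  set v : M := (sparsePoly t e a).eval β with hv
  have hcard := card_le_card_roots_sparsePoly_sub_C he het hs hgcd (fun i => hD i) hβ hβ'
  have hnat : (sparsePoly t e a - C v).natDegree = t := by
    rw [natDegree_sub_C, sparsePoly.natDegree he ht]
  have hm : (sparsePoly t e a - C v).Monic := by
    refine (sparsePoly.monic he ht a).sub_of_left (degree_C_le.trans_lt ?_)
    rw [← natDegree_pos_iff_degree_pos, sparsePoly.natDegree he ht]
    exact ht
  have hdvd : (X - C β) ^ 2 ∣ sparsePoly t e a - C v := by
    rw [← le_rootMultiplicity_iff hm.ne_zero]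
    exact (one_lt_rootMultiplicity_iff_isRoot hm.ne_zero).2 ⟨by simp [hv], by simpa using hβ'⟩
  let φ : MvPolynomial ι F →ₐ[F] M[X] :=
    MvPolynomial.aeval fun i => C (a i) + if i = l then X - C v else 0
  have hφ : ((evalRingHom v).comp (φ : MvPolynomial ι F →+* M[X])) =
      algebraMap (MvPolynomial ι F) M := by
    refine MvPolynomial.ringHom_ext (fun r => ?_) fun i => ?_
    · rw [← MvPolynomial.algebraMap_eq, ← IsScalarTower.algebraMap_apply]
      simp [-MvPolynomial.algebraMap_eq]
    · simp [φ, a, apply_ite]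
  have hφi : Function.Injective φ := by
    refine .of_comp (f := evalRingHom v) ?_
    have : Function.Injective (algebraMap (MvPolynomial ι F) M) := by
      rw [IsScalarTower.algebraMap_eq _ K M]
      exact (algebraMap K M).injective.comp (IsFractionRing.injective _ K)
    rwa [← hφ] at this
  let N := FractionRing M[X]
  let H : M[X][X] := (sparsePoly t e a - C v).map C + C X
  have hH : H = sparsePoly t e fun i => φ (MvPolynomial.X i) := by
    simp only [H, sparsePoly.map_sub_C_add_C_X hl, φ, MvPolynomial.aeval_X]
  have hψ : Function.Injective ((algebraMap M[X] N).comp (φ : MvPolynomial ι F →+* M[X])) :=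
    (IsFractionRing.injective M[X] N).comp hφi
  let ψ : K →+* N := IsFractionRing.lift hψ
  have hmap : (genericSparsePoly F ι K t e).map ψ = H.map (algebraMap M[X] N) := by
    rw [hH, genericSparsePoly, sparsePoly.map, sparsePoly.map]
    congr 1
    funext i
    exact IsFractionRing.lift_algebraMap hψ _
  let L := (H.map (algebraMap M[X] N)).SplittingField
  obtain ⟨σ, x, hx, y, hy, hxy, hσ⟩ := exists_isSwap_of_card_roots (N := N) (L := L)
    (sparsePoly t e a - C v) hm hdvd (hnat.symm ▸ hcard)
  exact Polynomial.Gal.galActionHom_surjective_of_swap_map _ ψ hmap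
    (fun x hx y hy x' hx' y' hy' hxy hxy' =>
      exists_algEquiv_apply_eq_of_mem_rootSet_genericSparsePoly het hgcd hl hs hx hy hx' hy' hxy
        hxy') hx hy hxy hσ

theorem card_rootSet_genericSparsePoly [CharZero F] (he : ∀ i, 0 < e i) (ht : 0 < t) {l : ι}
    (hl : e l = t) : Fintype.card ((genericSparsePoly F ι K t e).rootSet M) = t := by
  have hD := exists_derivation_fractionRing (F := F) (σ := ι) (K := K) (M := M)
  refine (card_rootSet_eq_natDegree ?_ (IsAlgClosed.splits _)).trans (sparsePoly.natDegree he ht _)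
  rw [← separable_map (algebraMap K M), genericSparsePoly_map_algebraMap]
  refine (isCoprime_iff_aeval_ne_zero_of_isAlgClosed M M _ _).2 fun x => ?_
  rw [coe_aeval_eq_eval, or_iff_not_imp_left, not_not]
  obtain ⟨D, hD⟩ := hD l
  exact eval_derivative_sparsePoly_ne_zero hl hD

end Generic

theorem nonempty_gal_genericSparsePoly_mulEquiv_perm {F ι K : Type*} (M : Type*) [Field F]
    [CharZero F] [Fintype ι] [DecidableEq ι] [Field K] [Algebra (MvPolynomial ι F) K]
    [IsFractionRing (MvPolynomial ι F) K] [Field M] [IsAlgClosed M] [Algebra K M]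
    [Algebra.IsAlgebraic K M]
    {t : ℕ} {e : ι → ℕ} (he : ∀ i, 0 < e i) (het : ∀ i, e i ≤ t) (hgcd : Finset.univ.gcd e = 1)
    {l : ι} (hl : e l = t) :
    Nonempty ((genericSparsePoly F ι K t e).Gal ≃* Equiv.Perm (Fin t)) := by
  have ht : 0 < t := hl ▸ he l
  let _ : Algebra (MvPolynomial ι F) M := ((algebraMap K M).comp (algebraMap _ K)).toAlgebra
  have : IsScalarTower (MvPolynomial ι F) K M := .of_algebraMap_eq' rfl
  let _ : Algebra F M := ((algebraMap (MvPolynomial ι F) M).comp (algebraMap F _)).toAlgebra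
  have : IsScalarTower F (MvPolynomial ι F) M := .of_algebraMap_eq' rfl
  have : Fact ((genericSparsePoly F ι K t e).map (algebraMap K M)).Splits :=
    ⟨IsAlgClosed.splits _⟩
  have hcard := card_rootSet_genericSparsePoly (F := F) (K := K) (M := M) he ht hl
  have hsurj : Function.Surjective
      (Polynomial.Gal.galActionHom (genericSparsePoly F ι K t e) M) := by
    by_cases hs : ∃ s, e s < t
    · obtain ⟨s, hs⟩ := hs
      exact galActionHom_genericSparsePoly_surjective (F := F) (K := K) he het hgcd hl hs
    · push Not at hs
      have h1 : t = 1 := Nat.dvd_one.1 (hgcd ▸ Finset.dvd_gcd fun i _ => by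
        rw [(hs i).antisymm (het i)])
      have : Subsingleton ((genericSparsePoly F ι K t e).rootSet M) :=
        Fintype.card_le_one_iff_subsingleton.1 (hcard.trans h1).le
      exact fun g => ⟨1, Subsingleton.elim _ _⟩
  exact ⟨(MulEquiv.ofBijective _ ⟨Polynomial.Gal.galActionHom_injective _ M, hsurj⟩).trans
    (Fintype.equivFinOfCardEq hcard).permCongrHom⟩

end

theorem stmt8 (F : Type*) [Field F] [CharZero F] (k t : ℕ) (hk : 2 ≤ k)
    (tv : Fin k → ℕ) (h1 : 1 ≤ tv ⟨0, by omega⟩) (hmono : Monotone tv)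
    (hlast : tv ⟨k - 1, by omega⟩ = t)
    (hgcd : Finset.univ.gcd tv = 1) :
    Nonempty
      ((Polynomial.X ^ t + ∑ i : Fin k,
          Polynomial.C (algebraMap (MvPolynomial (Fin k) F)
            (FractionRing (MvPolynomial (Fin k) F)) (MvPolynomial.X i)) *
            Polynomial.X ^ (t - tv i) :
          Polynomial (FractionRing (MvPolynomial (Fin k) F))).Gal ≃*
        Equiv.Perm (Fin t)) := by
  exact nonempty_gal_genericSparsePoly_mulEquiv_perm (K := FractionRing (MvPolynomial (Fin k) F))
    (AlgebraicClosure (FractionRing (MvPolynomial (Fin k) F)))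
    (fun i => h1.trans (hmono (Fin.mk_le_of_le_val (Nat.zero_le _))))
    (fun i => hlast ▸ hmono (Fin.le_def.2 (Nat.le_sub_one_of_lt i.2))) hgcd hlast
end

section
/- Let k ≥ 1 and t ≥ 1, let 1 ≤ n ≤ t, and let a_0, a_1, …, a_t be independent variables over a field of characteristic 0. Then Σ_{r=0}^{kt} Tr( (∂/∂a_0 Π_{r,t}^{[k]}(a_0,…,a_t)) · (Π_{r,t}^{[k]}(a_0,…,a_t))^{n−1} ) = Σ_{r=0}^{kt} Tr( (∂/∂a_n Π_{r,t}^{[k]}(a_0,…,a_t)) · (Π_{r,t}^{[k]}(a_0,…,a_t))^{n−1} ), where ∂/∂a_i acts entrywise on the matrix. -/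
open scoped BigOperators Classical

/-- The index set `G_{r,t}^{[k]}`: vectors `(l_1, …, l_t)` with `0 ≤ l_i ≤ k` and
`l_1 + ⋯ + l_t = r`. -/
def GIdx (k r t : ℕ) := {l : Fin t → Fin (k + 1) // (∑ i, (l i : ℕ)) = r}

noncomputable instance (k r t : ℕ) : Fintype (GIdx k r t) := by
  unfold GIdx; infer_instance

instance (k r t : ℕ) : DecidableEq (GIdx k r t) := by
  unfold GIdx; infer_instance

/-- The square matrix `Π_{r,t}^{[k]}(a_0, a_1, …, a_t)`, with rows and columns indexed by
`G_{r,t}^{[k]}`.  For `t ≥ 1` the `(α,β)` entry, for `α = (l_1, …, l_t)`, equals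
`k!·C(k, l_t+p_1+⋯+p_{t−1})·C(l_1,p_1)⋯C(l_{t−1},p_{t−1})·a_0^{k−l_t−Σp}·a_1^{p_1}⋯a_{t−1}^{p_{t−1}}·a_t^{l_t}`
if `β = (l_t+p_1+⋯+p_{t−1}, l_1−p_1, …, l_{t−1}−p_{t−1})` for (necessarily unique) integers
`0 ≤ p_i ≤ l_i` with `p_1+⋯+p_{t−1} ≤ k−l_t`, and `0` otherwise; `Π_{0,0}^{[k]}(a_0) = k!·a_0^k`. -/
noncomputable def PiMat {R : Type*} [CommRing R] (k t r : ℕ) (a : ℕ → R) :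
    Matrix (GIdx k r t) (GIdx k r t) R :=
  Matrix.of fun α β =>
    if ht : 0 < t then
      ∑ p : Fin t → Fin (k + 1),
        if (∀ i : Fin t, i.val + 1 < t → (p i : ℕ) ≤ (α.1 i : ℕ)) ∧
            (∀ i : Fin t, ¬ i.val + 1 < t → (p i : ℕ) = 0) ∧
            (α.1 ⟨t - 1, Nat.sub_lt ht one_pos⟩ : ℕ) + (∑ i, (p i : ℕ)) ≤ k ∧
            (β.1 ⟨0, ht⟩ : ℕ) = (α.1 ⟨t - 1, Nat.sub_lt ht one_pos⟩ : ℕ) + ∑ i, (p i : ℕ) ∧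
            (∀ j : Fin t, 0 < j.val →
              (β.1 j : ℕ) =
                (α.1 ⟨j.val - 1, lt_of_le_of_lt (Nat.pred_le _) j.isLt⟩ : ℕ) -
                  (p ⟨j.val - 1, lt_of_le_of_lt (Nat.pred_le _) j.isLt⟩ : ℕ)) then
          (Nat.factorial k : R) *
            (Nat.choose k ((α.1 ⟨t - 1, Nat.sub_lt ht one_pos⟩ : ℕ) + ∑ i, (p i : ℕ)) : R) *
            (∏ i : Fin t, if i.val + 1 < t then (Nat.choose (α.1 i : ℕ) (p i : ℕ) : R) else 1) *
            a 0 ^ (k - (α.1 ⟨t - 1, Nat.sub_lt ht one_pos⟩ : ℕ) - ∑ i, (p i : ℕ)) *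
            (∏ i : Fin t, if i.val + 1 < t then a (i.val + 1) ^ (p i : ℕ) else 1) *
            a t ^ (α.1 ⟨t - 1, Nat.sub_lt ht one_pos⟩ : ℕ)
        else 0
    else (Nat.factorial k : R) * a 0 ^ k


open Finset

/-- The function `x ↦ C(m, b) x^(m-b)`, a divided derivative of `x^m`. -/
def chooseMulPow {R : Type*} [CommRing R] (m b : ℕ) (x : R) : R :=
  (m.choose b : R) * x ^ (m - b)

/-- The product of the factors `chooseMulPow (u j) (v j) (x j)`. -/
def chooseMulPowProd {R : Type*} [CommRing R] {ι : Type*} [Fintype ι]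
    (u v : ι → ℕ) (x : ι → R) : R :=
  ∏ j, chooseMulPow (u j) (v j) (x j)

section Derivatives

variable {R : Type*} [CommRing R]

lemma mul_chooseMulPow_pred (m b : ℕ) (x : R) :
    (m : R) * chooseMulPow (m - 1) b x = ((b + 1 : ℕ) : R) * chooseMulPow m (b + 1) x := by
  unfold chooseMulPow
  rcases m with _ | m
  · simp
  · have h := congrArg (Nat.cast (R := R)) (Nat.add_one_mul_choose_eq m b)
    push_cast at h ⊢
    linear_combination x ^ (m - b) * h

lemma Derivation.chooseMulPow_apply (D : Derivation ℤ R R) (m b : ℕ) (x : R) :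
    D (chooseMulPow m b x) = ((b + 1 : ℕ) : R) * chooseMulPow m (b + 1) x * D x := by
  unfold chooseMulPow
  have h := congrArg (Nat.cast (R := R)) (Nat.choose_succ_right_eq m b)
  push_cast at h ⊢
  rw [Derivation.leibniz, Derivation.leibniz_pow, Derivation.map_natCast, Nat.sub_sub]
  simp only [smul_eq_mul, nsmul_eq_mul, mul_zero, add_zero]
  linear_combination (- x ^ (m - (b + 1)) * D x) * h

variable {ι : Type*} [Fintype ι] [DecidableEq ι]

lemma chooseMulPowProd_update_left (u v : ι → ℕ) (x : ι → R) (j : ι) (c : ℕ) :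
    chooseMulPowProd (Function.update u j c) v x =
      chooseMulPow c (v j) (x j) * ∏ i ∈ univ.erase j, chooseMulPow (u i) (v i) (x i) := by
  rw [chooseMulPowProd, ← mul_prod_erase _ _ (mem_univ j), Function.update_self]
  congr 1
  refine prod_congr rfl fun i hi => ?_
  rw [Function.update_of_ne (ne_of_mem_erase hi)]

lemma chooseMulPowProd_update_right (u v : ι → ℕ) (x : ι → R) (j : ι) (c : ℕ) :
    chooseMulPowProd u (Function.update v j c) x =
      chooseMulPow (u j) c (x j) * ∏ i ∈ univ.erase j, chooseMulPow (u i) (v i) (x i) := by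
  rw [chooseMulPowProd, ← mul_prod_erase _ _ (mem_univ j), Function.update_self]
  congr 1
  refine prod_congr rfl fun i hi => ?_
  rw [Function.update_of_ne (ne_of_mem_erase hi)]

lemma mul_chooseMulPowProd_pred (u v : ι → ℕ) (x : ι → R) (j : ι) :
    (u j : R) * chooseMulPowProd (Function.update u j (u j - 1)) v x =
      ((v j + 1 : ℕ) : R) * chooseMulPowProd u (Function.update v j (v j + 1)) x := by
  rw [chooseMulPowProd_update_left, chooseMulPowProd_update_right, ← mul_assoc, ← mul_assoc,
    mul_chooseMulPow_pred]

lemma pderiv_chooseMulPowProd (u v : ι → ℕ) (j : ι) :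
    MvPolynomial.pderiv j (chooseMulPowProd u v (MvPolynomial.X : ι → MvPolynomial ι R)) =
      ((v j + 1 : ℕ) : MvPolynomial ι R) *
        chooseMulPowProd u (Function.update v j (v j + 1)) MvPolynomial.X := by
  have hD (i : ι) : MvPolynomial.pderiv j
        (chooseMulPow (u i) (v i) (MvPolynomial.X i : MvPolynomial ι R)) =
      ((v i + 1 : ℕ) : MvPolynomial ι R) * chooseMulPow (u i) (v i + 1) (MvPolynomial.X i) *
        MvPolynomial.pderiv j (MvPolynomial.X i : MvPolynomial ι R) :=
    Derivation.chooseMulPow_apply ((MvPolynomial.pderiv (R := R) j).restrictScalars ℤ) _ _ _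
  rw [chooseMulPowProd_update_right, chooseMulPowProd, ← mul_prod_erase _ _ (mem_univ j),
    Derivation.leibniz, hD j]
  have h0 : MvPolynomial.pderiv j (∏ i ∈ univ.erase j,
      chooseMulPow (u i) (v i) (MvPolynomial.X i : MvPolynomial ι R)) = 0 := by
    refine prod_induction _ (fun q => MvPolynomial.pderiv j q = 0) ?_ ?_ ?_
    · intro p q hp hq
      rw [Derivation.leibniz, hp, hq, smul_zero, smul_zero, add_zero]
    · exact Derivation.map_one_eq_zero _
    · intro i hi
      rw [hD i, MvPolynomial.pderiv_X_of_ne (ne_of_mem_erase hi), mul_zero]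
  rw [h0, MvPolynomial.pderiv_X_self]
  simp only [smul_eq_mul]
  ring

end Derivatives

section Transfer

variable {R : Type*} [CommRing R] {k m : ℕ}

/-- The vector `(k, l_1, …, l_t)`. -/
def consVec (α : Fin m → Fin (k + 1)) : Fin (m + 1) → ℕ :=
  Fin.cons (α := fun _ => ℕ) k (fun i => (α i : ℕ))

/-- The vector `(l_1, …, l_t, 0)`. -/
def snocVec (β : Fin m → Fin (k + 1)) : Fin (m + 1) → ℕ :=
  Fin.snoc (α := fun _ => ℕ) (fun i => (β i : ℕ)) 0

@[simp] lemma consVec_zero (α : Fin m → Fin (k + 1)) : consVec α 0 = k := rfl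

@[simp] lemma consVec_succ (α : Fin m → Fin (k + 1)) (i : Fin m) : consVec α i.succ = α i := rfl

@[simp] lemma snocVec_castSucc (α : Fin m → Fin (k + 1)) (i : Fin m) :
    snocVec α i.castSucc = α i := by simp [snocVec]

@[simp] lemma snocVec_last (α : Fin m → Fin (k + 1)) : snocVec α (Fin.last m) = 0 := by
  simp [snocVec]

lemma consVec_update (α : Fin m → Fin (k + 1)) (i : Fin m) (c : Fin (k + 1)) :
    consVec (Function.update α i c) = Function.update (consVec α) i.succ c := by
  ext j
  refine Fin.cases ?_ (fun j => ?_) j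
  · rw [Function.update_of_ne (Fin.succ_ne_zero i).symm]; simp
  · by_cases h : j = i
    · subst h; simp
    · rw [Function.update_of_ne (by simpa using h)]; simp [h]

lemma snocVec_update (α : Fin m → Fin (k + 1)) (i : Fin m) (c : Fin (k + 1)) :
    snocVec (Function.update α i c) = Function.update (snocVec α) i.castSucc c := by
  ext j
  refine Fin.lastCases ?_ (fun j => ?_) j
  · rw [Function.update_of_ne (Fin.castSucc_ne_last i).symm]; simp
  · by_cases h : j = i
    · subst h; simp
    · rw [Function.update_of_ne (by simpa using h)]; simp [h]

/-- The direct sum of the matrices `Π_{r,t}`, for `d = 0`; for general `d`, the same weights are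
put on the pairs whose coordinate sums differ by `d`. -/
noncomputable def transferMat (d : ℕ) (x : Fin (m + 1) → R) :
    Matrix (Fin m → Fin (k + 1)) (Fin m → Fin (k + 1)) R :=
  Matrix.of fun α β =>
    if ∑ i, (β i : ℕ) = ∑ i, (α i : ℕ) + d then
      (k.factorial : R) * chooseMulPowProd (consVec α) (snocVec β) x else 0

/-- The vector `α` with its `i`-th coordinate lowered by one (if it is positive). -/
def lowerVec (i : Fin m) (α : Fin m → Fin (k + 1)) : Fin m → Fin (k + 1) :=
  Function.update α i ⟨α i - 1, by omega⟩

/-- The matrix of the partial derivative in the `i`-th variable on monomials. -/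
noncomputable def lowerMat (i : Fin m) :
    Matrix (Fin m → Fin (k + 1)) (Fin m → Fin (k + 1)) R :=
  Matrix.of fun α β => if β = lowerVec i α then ((α i : ℕ) : R) else 0

lemma lowerMat_mul_apply (i : Fin m) (N : Matrix (Fin m → Fin (k + 1)) (Fin m → Fin (k + 1)) R)
    (α β : Fin m → Fin (k + 1)) :
    (lowerMat i * N : Matrix _ _ R) α β = ((α i : ℕ) : R) * N (lowerVec i α) β := by
  simp [Matrix.mul_apply, lowerMat]

lemma mul_lowerMat_apply_of_lt (i : Fin m)
    (N : Matrix (Fin m → Fin (k + 1)) (Fin m → Fin (k + 1)) R)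
    (α β : Fin m → Fin (k + 1)) (h : (β i : ℕ) < k) :
    (N * lowerMat i : Matrix _ _ R) α β =
      N α (Function.update β i ⟨β i + 1, by omega⟩) * (((β i : ℕ) + 1 : ℕ) : R) := by
  rw [Matrix.mul_apply, sum_eq_single (Function.update β i ⟨β i + 1, by omega⟩)]
  · simp [lowerMat, lowerVec]
  · intro γ _ hγ
    simp only [lowerMat, Matrix.of_apply]
    split_ifs with hβ
    · rcases Nat.eq_zero_or_pos (γ i : ℕ) with h0 | h0
      · simp [h0]
      · refine absurd ?_ hγ
        have hi : (β i : ℕ) = γ i - 1 := by rw [hβ]; simp [lowerVec]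
        ext j
        by_cases hj : j = i
        · subst hj
          rw [Function.update_self]
          simp only
          omega
        · rw [Function.update_of_ne hj, hβ, lowerVec, Function.update_of_ne hj]
    · simp
  · simp

lemma mul_lowerMat_apply_of_eq (i : Fin m)
    (N : Matrix (Fin m → Fin (k + 1)) (Fin m → Fin (k + 1)) R)
    (α β : Fin m → Fin (k + 1)) (h : (β i : ℕ) = k) :
    (N * lowerMat i : Matrix _ _ R) α β = 0 := by
  rw [Matrix.mul_apply]
  refine sum_eq_zero fun γ _ => ?_
  simp only [lowerMat, Matrix.of_apply]
  split_ifs with hβ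
  · have h1 : (β i : ℕ) = γ i - 1 := by rw [hβ]; simp [lowerVec]
    have h0 : (γ i : ℕ) = 0 := by omega
    simp [h0]
  · simp

lemma sum_update_val (α : Fin m → Fin (k + 1)) (i : Fin m) (c : Fin (k + 1)) :
    ∑ j, (Function.update α i c j : ℕ) + α i = ∑ j, (α j : ℕ) + c := by
  rw [← add_sum_erase _ _ (mem_univ i), ← add_sum_erase univ (fun j => (α j : ℕ)) (mem_univ i),
    Function.update_self, sum_congr rfl (g := fun j => (α j : ℕ))]
  · ring
  · intro j hj
    rw [Function.update_of_ne (ne_of_mem_erase hj)]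

/-- Multiplying by `lowerMat` on the left lowers the upper exponent. -/
lemma lowerMat_mul_transferMat_apply (i : Fin m) (d : ℕ) (x : Fin (m + 1) → R)
    (α β : Fin m → Fin (k + 1)) :
    (lowerMat i * transferMat d x : Matrix _ _ R) α β =
      if ∑ i, (β i : ℕ) + 1 = ∑ i, (α i : ℕ) + d then
        (k.factorial : R) * (((snocVec β i.succ + 1 : ℕ) : R) * chooseMulPowProd (consVec α)
          (Function.update (snocVec β) i.succ (snocVec β i.succ + 1)) x) else 0 := by
  rw [lowerMat_mul_apply, ← mul_chooseMulPowProd_pred, consVec_succ, transferMat, Matrix.of_apply,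
    lowerVec, consVec_update]
  have h := sum_update_val α i ⟨α i - 1, by omega⟩
  simp only at h
  rcases Nat.eq_zero_or_pos (α i : ℕ) with h0 | h0
  · simp [h0]
  · by_cases hs : ∑ i, (β i : ℕ) + 1 = ∑ i, (α i : ℕ) + d
    · rw [if_pos hs, if_pos (by omega)]; ring
    · rw [if_neg hs, if_neg (by omega), mul_zero]

/-- Multiplying by `lowerMat` on the right raises the lower exponent. -/
lemma transferMat_mul_lowerMat_apply (i : Fin m) (d : ℕ) (x : Fin (m + 1) → R)
    (α β : Fin m → Fin (k + 1)) :
    (transferMat d x * lowerMat i : Matrix _ _ R) α β =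
      if ∑ i, (β i : ℕ) + 1 = ∑ i, (α i : ℕ) + d then
        (k.factorial : R) * (((snocVec β i.castSucc + 1 : ℕ) : R) * chooseMulPowProd (consVec α)
          (Function.update (snocVec β) i.castSucc (snocVec β i.castSucc + 1)) x) else 0 := by
  rcases (Nat.lt_succ_iff.mp (β i).isLt).lt_or_eq with h | h
  · rw [mul_lowerMat_apply_of_lt i _ α β h, transferMat, Matrix.of_apply, snocVec_update,
      snocVec_castSucc]
    have h := sum_update_val β i ⟨β i + 1, by omega⟩
    simp only at h
    by_cases hs : ∑ i, (β i : ℕ) + 1 = ∑ i, (α i : ℕ) + d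
    · rw [if_pos hs, if_pos (by omega)]; ring
    · rw [if_neg hs, if_neg (by omega), zero_mul]
  · have hle : consVec α i.castSucc ≤ k := by
      refine Fin.cases (le_of_eq rfl) (fun j => ?_) i.castSucc
      rw [consVec_succ]; omega
    rw [mul_lowerMat_apply_of_eq i _ α β h, chooseMulPowProd_update_right, chooseMulPow,
      Nat.choose_eq_zero_of_lt (by rw [snocVec_castSucc]; omega)]
    simp

lemma lowerMat_mul_transferMat_comm (x : Fin (m + 1) → R) (d : ℕ) (i j : Fin m)
    (h : i.succ = j.castSucc) :
    (lowerMat i * transferMat d x : Matrix (Fin m → Fin (k + 1)) _ R) =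
      transferMat d x * lowerMat j := by
  ext α β
  rw [lowerMat_mul_transferMat_apply, transferMat_mul_lowerMat_apply, h]

lemma pderiv_transferMat_apply (j : Fin (m + 1)) (α β : Fin m → Fin (k + 1)) :
    MvPolynomial.pderiv j
        (transferMat 0 (MvPolynomial.X : _ → MvPolynomial (Fin (m + 1)) R) α β) =
      if ∑ i, (β i : ℕ) + 1 = ∑ i, (α i : ℕ) + 1 then
        (k.factorial : MvPolynomial (Fin (m + 1)) R) *
          (((snocVec β j + 1 : ℕ) : MvPolynomial (Fin (m + 1)) R) * chooseMulPowProd (consVec α)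
          (Function.update (snocVec β) j (snocVec β j + 1)) MvPolynomial.X) else 0 := by
  simp only [transferMat, Matrix.of_apply, add_zero, add_left_inj]
  split_ifs
  · rw [Derivation.leibniz, Derivation.map_natCast, pderiv_chooseMulPowProd]
    simp
  · exact map_zero _

lemma pderiv_succ_transferMat (i : Fin m) :
    (transferMat 0 (MvPolynomial.X : _ → MvPolynomial (Fin (m + 1)) R) :
        Matrix (Fin m → Fin (k + 1)) _ _).map (MvPolynomial.pderiv i.succ) =
      lowerMat i * transferMat 1 MvPolynomial.X := by
  ext1 α β
  rw [lowerMat_mul_transferMat_apply, Matrix.map_apply, pderiv_transferMat_apply]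

lemma pderiv_castSucc_transferMat (i : Fin m) :
    (transferMat 0 (MvPolynomial.X : _ → MvPolynomial (Fin (m + 1)) R) :
        Matrix (Fin m → Fin (k + 1)) _ _).map (MvPolynomial.pderiv i.castSucc) =
      transferMat 1 MvPolynomial.X * lowerMat i := by
  ext1 α β
  rw [transferMat_mul_lowerMat_apply, Matrix.map_apply, pderiv_transferMat_apply]

lemma lowerMat_mul_transferMat_pow (x : Fin (m + 1) → R) (d s : ℕ) (hm : 0 < m) (hs : s < m) :
    (lowerMat ⟨0, hm⟩ * transferMat d x ^ s : Matrix (Fin m → Fin (k + 1)) _ R) =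
      transferMat d x ^ s * lowerMat ⟨s, hs⟩ := by
  induction s with
  | zero => simp
  | succ s ih =>
    rw [pow_succ, ← mul_assoc, ih (by omega), mul_assoc, mul_assoc,
      lowerMat_mul_transferMat_comm x d ⟨s, _⟩ ⟨s + 1, hs⟩ rfl]

lemma trace_pderiv_transferMat (s : ℕ) (hs : s < m) :
    Matrix.trace ((transferMat 0 (MvPolynomial.X : _ → MvPolynomial (Fin (m + 1)) R) :
        Matrix (Fin m → Fin (k + 1)) _ _).map (MvPolynomial.pderiv 0) *
          transferMat 0 MvPolynomial.X ^ s) =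
      Matrix.trace ((transferMat 0 (MvPolynomial.X : _ → MvPolynomial (Fin (m + 1)) R) :
        Matrix (Fin m → Fin (k + 1)) _ _).map (MvPolynomial.pderiv (Fin.succ ⟨s, hs⟩)) *
          transferMat 0 MvPolynomial.X ^ s) := by
  have hm : 0 < m := by omega
  have h0 : (0 : Fin (m + 1)) = Fin.castSucc ⟨0, hm⟩ := rfl
  rw [h0, pderiv_castSucc_transferMat, pderiv_succ_transferMat, mul_assoc,
    lowerMat_mul_transferMat_pow _ _ _ hm hs, ← mul_assoc, Matrix.trace_mul_comm, mul_assoc]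

end Transfer

section Blocks

variable {R : Type*} [CommRing R] {k t : ℕ}

/-- The diagonal block of a matrix on the vectors with coordinate sum `r`. -/
def sumBlock (r : ℕ) (M : Matrix (Fin t → Fin (k + 1)) (Fin t → Fin (k + 1)) R) :
    Matrix (GIdx k r t) (GIdx k r t) R :=
  Matrix.of fun α β => M α.1 β.1

lemma sum_gIdx {A : Type*} [AddCommMonoid A] (r : ℕ) (f : (Fin t → Fin (k + 1)) → A) :
    ∑ γ : GIdx k r t, f γ.1 = ∑ γ with ∑ i, (γ i : ℕ) = r, f γ := by
  exact (@sum_subtype _ _ _ (fun γ : Fin t → Fin (k + 1) => ∑ i, (γ i : ℕ) = r)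
    (instFintypeGIdx k r t) _ (by simp) f).symm

lemma sumBlock_mul (r : ℕ) (M N : Matrix (Fin t → Fin (k + 1)) (Fin t → Fin (k + 1)) R)
    (hM : ∀ α β, ∑ i, (β i : ℕ) ≠ ∑ i, (α i : ℕ) → M α β = 0) :
    sumBlock r (M * N) = sumBlock r M * sumBlock r N := by
  ext α β
  simp only [sumBlock, Matrix.of_apply, Matrix.mul_apply]
  rw [sum_gIdx r (fun γ => M α.1 γ * N γ β.1), sum_filter_of_ne]
  intro γ _ h
  by_contra hγ
  exact h (by rw [hM _ _ (by rwa [α.2]), zero_mul])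

lemma sumBlock_pow (r s : ℕ) (M : Matrix (Fin t → Fin (k + 1)) (Fin t → Fin (k + 1)) R)
    (hM : ∀ α β, ∑ i, (β i : ℕ) ≠ ∑ i, (α i : ℕ) → M α β = 0) :
    sumBlock r (M ^ s) = sumBlock r M ^ s := by
  induction s with
  | zero =>
    ext α β
    have h : α = β ↔ α.1 = β.1 := Subtype.ext_iff
    simp [sumBlock, Matrix.one_apply, h]
  | succ s ih => rw [pow_succ', pow_succ', sumBlock_mul r M _ hM, ih]

lemma sum_trace_sumBlock (M : Matrix (Fin t → Fin (k + 1)) (Fin t → Fin (k + 1)) R) :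
    ∑ r ∈ range (k * t + 1), Matrix.trace (sumBlock r M) = Matrix.trace M := by
  simp only [Matrix.trace, Matrix.diag_apply, sumBlock, Matrix.of_apply]
  rw [sum_congr rfl fun r _ => sum_gIdx r (fun γ => M γ γ)]
  refine sum_fiberwise_of_maps_to (fun γ _ => ?_) _
  have h := sum_le_card_nsmul univ (fun i => (γ i : ℕ)) k (fun i _ => by omega)
  simp only [card_univ, Fintype.card_fin, smul_eq_mul] at h
  rw [mem_range]
  nlinarith

end Blocks

/-- The weight of the entry of `Π_{r,t}` determined by the choice `p` of the numbers `p_i`. -/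
lemma prod_weight_eq {R : Type*} [CommRing R] (k m : ℕ) (a : ℕ → R)
    (α β p : Fin (m + 1) → Fin (k + 1))
    (hle : ∀ i : Fin m, (β i.succ : ℕ) ≤ α i.castSucc)
    (hp : ∀ i : Fin m, (p i.castSucc : ℕ) = α i.castSucc - β i.succ)
    (h0 : (β 0 : ℕ) = α (Fin.last m) + ∑ i, (p i : ℕ)) :
    (k.factorial : R) * (k.choose (α (Fin.last m) + ∑ i, (p i : ℕ)) : R) *
        (∏ i : Fin (m + 1), if i.val + 1 < m + 1 then ((α i : ℕ).choose (p i) : R) else 1) *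
        a 0 ^ (k - α (Fin.last m) - ∑ i, (p i : ℕ)) *
        (∏ i : Fin (m + 1), if i.val + 1 < m + 1 then a (i.val + 1) ^ (p i : ℕ) else 1) *
        a (m + 1) ^ (α (Fin.last m) : ℕ) =
      (k.factorial : R) * chooseMulPowProd (consVec α) (snocVec β) fun i => a i := by
  have hw : chooseMulPowProd (consVec α) (snocVec β) (fun i => a i) =
      chooseMulPow k (β 0) (a 0) *
        ((∏ i : Fin m, ((α i.castSucc : ℕ).choose (p i.castSucc) : R)) *
          (∏ i : Fin m, a (i + 1) ^ (p i.castSucc : ℕ)) *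
          a (m + 1) ^ (α (Fin.last m) : ℕ)) := by
    rw [chooseMulPowProd, Fin.prod_univ_succ, Fin.prod_univ_castSucc, ← prod_mul_distrib]
    congr 2
    · refine prod_congr rfl fun i _ => ?_
      rw [consVec_succ, Fin.succ_castSucc, snocVec_castSucc, chooseMulPow, hp,
        Nat.choose_symm (hle i)]
      rfl
    · rw [consVec_succ, Fin.succ_last, snocVec_last, chooseMulPow]
      simp
  rw [hw, ← h0, Nat.sub_sub, ← h0, chooseMulPow, Fin.prod_univ_castSucc, Fin.prod_univ_castSucc]
  simp
  ring

lemma piMat_eq_sumBlock {R : Type*} [CommRing R] (k m r : ℕ) (a : ℕ → R) :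
    PiMat k (m + 1) r a = sumBlock r (transferMat 0 fun i : Fin (m + 2) => a i) := by
  ext α β
  have hsum : ∑ i, (β.1 i : ℕ) = ∑ i, (α.1 i : ℕ) := β.2.trans α.2.symm
  rw [PiMat, sumBlock, transferMat, Matrix.of_apply, Matrix.of_apply, Matrix.of_apply,
    if_pos (by simpa using hsum), dif_pos m.succ_pos]
  rw [Fin.sum_univ_succ, Fin.sum_univ_castSucc] at hsum
  by_cases hle : ∀ i : Fin m, (β.1 i.succ : ℕ) ≤ α.1 i.castSucc
  · let p : Fin (m + 1) → Fin (k + 1) :=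
      Fin.snoc (α := fun _ => Fin (k + 1))
        (fun i : Fin m => ⟨α.1 i.castSucc - β.1 i.succ, by omega⟩) 0
    have hp (i : Fin m) : (p i.castSucc : ℕ) = α.1 i.castSucc - β.1 i.succ := by simp [p]
    have hpl : (p (Fin.last m) : ℕ) = 0 := by simp [p]
    have h0 : (β.1 0 : ℕ) = α.1 (Fin.last m) + ∑ i, (p i : ℕ) := by
      have h : ∑ i : Fin m, (p i.castSucc : ℕ) + ∑ i : Fin m, (β.1 i.succ : ℕ) =
          ∑ i : Fin m, (α.1 i.castSucc : ℕ) := by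
        rw [← sum_add_distrib]
        exact sum_congr rfl fun i _ => by rw [hp, Nat.sub_add_cancel (hle i)]
      rw [Fin.sum_univ_castSucc, hpl]
      omega
    rw [sum_eq_single p, if_pos]
    · exact prod_weight_eq k m a α.1 β.1 p hle hp h0
    · refine ⟨fun i => ?_, fun i => ?_, ?_, h0, fun j => ?_⟩
      · refine Fin.lastCases (by simp) (fun i _ => ?_) i
        have h1 := hp i
        omega
      · exact Fin.lastCases (fun _ => hpl) (fun i h => absurd h (by simp)) i
      · have h1 : (β.1 0 : ℕ) ≤ k := Nat.lt_succ_iff.mp (β.1 0).isLt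
        rw [h0] at h1
        exact h1
      · refine Fin.cases (by simp) (fun j _ => ?_) j
        have h1 := hp j
        have h2 := hle j
        change (β.1 j.succ : ℕ) = α.1 j.castSucc - p j.castSucc
        omega
    · intro q _ hq
      refine if_neg fun ⟨h1, h2, _, _, h5⟩ => hq ?_
      ext i
      refine Fin.lastCases ?_ (fun i => ?_) i
      · rw [h2 _ (by simp), hpl]
      · have h3 := h1 i.castSucc (by simp)
        have h4 : (β.1 i.succ : ℕ) = α.1 i.castSucc - q i.castSucc := h5 i.succ (by simp)
        rw [hp]
        omega
    · simp
  · push Not at hle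
    obtain ⟨j, hj⟩ := hle
    rw [sum_eq_zero]
    · rw [chooseMulPowProd, prod_eq_zero (mem_univ j.castSucc.succ), mul_zero]
      rw [consVec_succ, Fin.succ_castSucc, snocVec_castSucc, chooseMulPow,
        Nat.choose_eq_zero_of_lt hj, Nat.cast_zero, zero_mul]
    · intro q _
      refine if_neg fun ⟨_, _, _, _, h5⟩ => ?_
      have h4 : (β.1 j.succ : ℕ) = α.1 j.castSucc - q j.castSucc := h5 j.succ (by simp)
      omega

theorem stmt16 (F : Type*) [Field F] [CharZero F] (k t n : ℕ) (hk : 1 ≤ k) (ht : 1 ≤ t)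
    (hn1 : 1 ≤ n) (hnt : n ≤ t) :
    ∑ r ∈ Finset.range (k * t + 1),
        Matrix.trace
          (((PiMat k t r (fun i =>
                if h : i ≤ t then
                    (MvPolynomial.X (⟨i, by omega⟩ : Fin (t + 1)) : MvPolynomial (Fin (t + 1)) F)
                  else 0)).map
              (fun q => MvPolynomial.pderiv (⟨0, by omega⟩ : Fin (t + 1)) q)) *
            (PiMat k t r (fun i =>
              if h : i ≤ t then
                  (MvPolynomial.X (⟨i, by omega⟩ : Fin (t + 1)) : MvPolynomial (Fin (t + 1)) F)
                else 0)) ^ (n - 1)) =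
      ∑ r ∈ Finset.range (k * t + 1),
        Matrix.trace
          (((PiMat k t r (fun i =>
                if h : i ≤ t then
                    (MvPolynomial.X (⟨i, by omega⟩ : Fin (t + 1)) : MvPolynomial (Fin (t + 1)) F)
                  else 0)).map
              (fun q => MvPolynomial.pderiv (⟨n, by omega⟩ : Fin (t + 1)) q)) *
            (PiMat k t r (fun i =>
              if h : i ≤ t then
                  (MvPolynomial.X (⟨i, by omega⟩ : Fin (t + 1)) : MvPolynomial (Fin (t + 1)) F)
                else 0)) ^ (n - 1)) := by
  obtain ⟨t, rfl⟩ : ∃ m, t = m + 1 := ⟨t - 1, by omega⟩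
  obtain ⟨s, rfl⟩ : ∃ s, n = s + 1 := ⟨n - 1, by omega⟩
  have hX : (fun i : Fin (t + 2) => (fun i : ℕ => if h : i ≤ t + 1 then
      (MvPolynomial.X (⟨i, by omega⟩ : Fin (t + 2)) : MvPolynomial (Fin (t + 2)) F)
        else 0) i) = MvPolynomial.X := by
    funext i
    exact dif_pos (Nat.lt_succ_iff.mp i.isLt)
  have hT (α β : Fin (t + 1) → Fin (k + 1)) (h : ∑ i, (β i : ℕ) ≠ ∑ i, (α i : ℕ)) :
      transferMat 0 (MvPolynomial.X : _ → MvPolynomial (Fin (t + 2)) F) α β = 0 := by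
    rw [transferMat, Matrix.of_apply, if_neg (by simpa using h)]
  have key (j : Fin (t + 2)) :
      ∑ r ∈ range (k * (t + 1) + 1), Matrix.trace
        ((sumBlock r (transferMat 0 MvPolynomial.X)).map
            (fun q : MvPolynomial (Fin (t + 2)) F => MvPolynomial.pderiv j q) *
          sumBlock (k := k) r (transferMat 0 MvPolynomial.X) ^ s) =
      Matrix.trace ((transferMat 0 (MvPolynomial.X : _ → MvPolynomial (Fin (t + 2)) F) :
        Matrix (Fin (t + 1) → Fin (k + 1)) _ _).map (MvPolynomial.pderiv j) *
          transferMat 0 MvPolynomial.X ^ s) := by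
    rw [← sum_trace_sumBlock]
    refine sum_congr rfl fun r _ => ?_
    rw [sumBlock_mul, sumBlock_pow _ _ _ hT]
    · rfl
    · intro α β h
      rw [Matrix.map_apply, hT α β h, map_zero]
  simp only [piMat_eq_sumBlock, hX, Nat.add_sub_cancel]
  exact (key _).trans ((trace_pderiv_transferMat s (by omega)).trans (key _).symm)
end

section
/- Let k ≥ 1 and t ≥ 0, and let a_0, a_1, …, a_t be elements of a commutative ring with unity. Then for all n ≥ 1, per( (Σ_{i=0}^{t} a_i · (P_n(x))^i) ⊗ J_k ) = Σ_{r=0}^{kt} Tr( (Π_{r,t}^{[k]}(a_0, a_1, …, a_t))^n ) · x^r, as polynomials in x. -/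
open scoped BigOperators Classical

open Kronecker

/-- The `n × n` matrix `P_n(x)`, with `(i,j)` entry `1` if `j − i = 1`, entry `x` if
`i = n` and `j = 1` (in `1`-based indexing), and `0` otherwise. -/
def PmatX {R : Type*} [CommRing R] (n : ℕ) (x : R) : Matrix (Fin n) (Fin n) R :=
  Matrix.of fun i j =>
    if (j : ℕ) = (i : ℕ) + 1 then 1
    else if (i : ℕ) = n - 1 ∧ (j : ℕ) = 0 then x
    else 0

/-- The permanent of a square matrix: `per(B) = ∑_{σ ∈ Sym} ∏_i B i (σ i)`. -/
noncomputable def sqPer {R : Type*} [CommRing R] {ι : Type*} [Fintype ι] [DecidableEq ι]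
    (M : Matrix ι ι R) : R :=
  ∑ σ : Equiv.Perm ι, ∏ i, M i (σ i)

theorem card_perm_comp_eq {A B : Type*} [Fintype A] [DecidableEq A] [Fintype B] [DecidableEq B]
    (g f : A → B) :
    Fintype.card {σ : Equiv.Perm A // g ∘ σ = f} =
      if ∀ j, Fintype.card {x // f x = j} = Fintype.card {x // g x = j} then
        ∏ j, (Fintype.card {x // g x = j}).factorial
      else 0 := by
  split_ifs with h
  · let e : Equiv.Perm A :=
      Equiv.ofFiberEquiv (f := f) (g := g) fun j => Fintype.equivOfCardEq (h j)
    have he : g ∘ e = f := funext fun a => Equiv.ofFiberEquiv_map _ a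
    rw [← DomMulAct.stabilizer_card g]
    refine Fintype.card_congr ((Equiv.mulRight e⁻¹).subtypeEquiv fun σ => ?_)
    rw [← he, Equiv.coe_mulRight, Equiv.Perm.coe_mul, ← Function.comp_assoc, Equiv.Perm.inv_def,
      Equiv.comp_symm_eq]
  · rw [Fintype.card_eq_zero_iff]
    refine ⟨fun ⟨σ, hσ⟩ => h fun j => Fintype.card_congr (σ.subtypeEquiv fun x => ?_)⟩
    rw [← hσ]; rfl

theorem sqPer_kronecker_ones {S A : Type*} [CommRing S] [Fintype A] [DecidableEq A] (k : ℕ)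
    (M : Matrix A A S) :
    sqPer (M ⊗ₖ (Matrix.of fun (_ : Fin k) (_ : Fin k) => (1 : S))) =
      (k.factorial : S) ^ Fintype.card A *
        MvPolynomial.coeff (Finsupp.equivFunOnFinite.symm fun _ => k)
          (∏ i, (∑ j, MvPolynomial.monomial (Finsupp.single j 1) (M i j)) ^ k) := by
  have hR : ∏ i, (∑ j, MvPolynomial.monomial (Finsupp.single j 1) (M i j)) ^ k =
      ∑ f : A × Fin k → A, MvPolynomial.monomial (∑ x, Finsupp.single (f x) 1)
        (∏ x, M x.1 (f x)) := by
    simp_rw [MvPolynomial.monomial_sum_prod]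
    rw [← Fintype.prod_sum (fun (x : A × Fin k) (j : A) =>
      MvPolynomial.monomial (Finsupp.single j 1) (M x.1 j)), Fintype.prod_prod_type]
    simp
  have hL : sqPer (M ⊗ₖ (Matrix.of fun (_ : Fin k) (_ : Fin k) => (1 : S))) =
      ∑ σ : Equiv.Perm (A × Fin k), ∏ x, M x.1 ((Prod.fst ∘ σ) x) := by
    simp [sqPer]
  have hcard (j : A) : Fintype.card {x : A × Fin k // x.1 = j} = k := by
    rw [Fintype.card_congr (Equiv.prodSubtypeFstEquivSubtypeProd (p := fun a : A => a = j))]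
    simp
  have hfib : ∀ (f : A × Fin k → A), (∑ x, Finsupp.single (f x) 1 =
      (Finsupp.equivFunOnFinite.symm fun _ => k : A →₀ ℕ)) ↔
      ∀ j, Fintype.card {x // f x = j} = Fintype.card {x : A × Fin k // x.1 = j} := by
    intro f
    rw [Finsupp.ext_iff]
    refine forall_congr' fun j => ?_
    rw [hcard, Fintype.card_subtype, Finset.card_filter]
    simp [Finsupp.finsetSum_apply, Finsupp.single_apply]
  rw [hL, hR, MvPolynomial.coeff_sum, Finset.mul_sum,
    ← Finset.sum_fiberwise Finset.univ (fun σ : Equiv.Perm (A × Fin k) => Prod.fst ∘ σ)]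
  refine Finset.sum_congr rfl fun f _ => ?_
  rw [Finset.sum_congr rfl (g := fun _ => ∏ x, M x.1 (f x))
    fun σ hσ => by rw [(Finset.mem_filter.1 hσ).2], Finset.sum_const, ← Fintype.card_subtype,
    card_perm_comp_eq, MvPolynomial.coeff_monomial]
  simp_rw [hfib f]
  split_ifs with h
  · rw [nsmul_eq_mul]
    congr 1
    simp [hcard]
  · simp

theorem sum_pow_apply_eq_sum_walks {S ι : Type*} [CommRing S] [Fintype ι] [DecidableEq ι]
    (M : Matrix ι ι S) (m : ℕ) (F : ι → ι → S) :
    ∑ i, ∑ j, (M ^ m) i j * F i j =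
      ∑ w : Fin (m + 1) → ι,
        (∏ i : Fin m, M (w i.castSucc) (w i.succ)) * F (w 0) (w (Fin.last m)) := by
  induction m generalizing F with
  | zero =>
    rw [← (Equiv.funUnique (Fin 1) ι).symm.sum_comp]
    simp [Matrix.one_apply]
  | succ m ih =>
    rw [← (Fin.consEquiv fun _ : Fin (m + 2) => ι).sum_comp, Fintype.sum_prod_type]
    refine Finset.sum_congr rfl fun i _ => ?_
    have := ih fun p q => M i p * F i q
    simp only [Fin.consEquiv_apply, Fin.prod_univ_succ, Fin.cons_succ, Fin.cons_zero,
      Fin.castSucc_zero, ← Fin.succ_castSucc, ← Fin.succ_last]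
    simp_rw [pow_succ', Matrix.mul_apply, Finset.sum_mul]
    rw [Finset.sum_comm]
    convert! this using 1
    · refine Finset.sum_congr rfl fun p _ => Finset.sum_congr rfl fun q _ => by ring
    · refine Finset.sum_congr rfl fun w _ => by ring

theorem trace_pow_succ_eq_sum_closed_walks {S ι : Type*} [CommRing S] [Fintype ι] [DecidableEq ι]
    (M : Matrix ι ι S) (m : ℕ) :
    Matrix.trace (M ^ (m + 1)) =
      ∑ w : Fin (m + 1) → ι, ∏ i, M (w i) (w (finRotate (m + 1) i)) := by
  have := sum_pow_apply_eq_sum_walks M m fun i j => M j i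
  simp_rw [Fin.prod_univ_castSucc, finRotate_last, finRotate_apply, Fin.coeSucc_eq_succ]
  rw [← this]
  simp [Matrix.trace, pow_succ, Matrix.mul_apply]

/-- The sequence `c, l_1, …, l_t, 0, 0, …` attached to a vector `(l_1, …, l_t)`. -/
def chainSeq {t K : ℕ} (c : ℕ) (l : Fin t → Fin (K + 1)) : ℕ → ℕ
  | 0 => c
  | i + 1 => if h : i < t then l ⟨i, h⟩ else 0

@[simp] theorem chainSeq_zero {t K : ℕ} (c : ℕ) (l : Fin t → Fin (K + 1)) :
    chainSeq c l 0 = c := rfl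

theorem chainSeq_succ_of_lt {t K : ℕ} (c : ℕ) (l : Fin t → Fin (K + 1)) {i : ℕ} (h : i < t) :
    chainSeq c l (i + 1) = l ⟨i, h⟩ := dif_pos h

theorem chainSeq_succ_of_le {t K : ℕ} (c : ℕ) (l : Fin t → Fin (K + 1)) {i : ℕ} (h : t ≤ i) :
    chainSeq c l (i + 1) = 0 := dif_neg h.not_gt

theorem chainSeq_cons_succ {t K : ℕ} (c : ℕ) (v : Fin (K + 1)) (l : Fin t → Fin (K + 1)) (i : ℕ) :
    chainSeq c (Fin.cons v l : Fin (t + 1) → Fin (K + 1)) (i + 1) = chainSeq v l i := by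
  cases i with
  | zero => rw [chainSeq_succ_of_lt _ _ (Nat.succ_pos t)]; rfl
  | succ i =>
    by_cases h : i < t
    · rw [chainSeq_succ_of_lt _ _ h, chainSeq_succ_of_lt _ _ (Nat.succ_lt_succ h)]; rfl
    · rw [chainSeq_succ_of_le _ _ (by omega), chainSeq_succ_of_le _ _ (by omega)]

theorem sum_range_chainSeq_succ {t K : ℕ} (c : ℕ) (l : Fin t → Fin (K + 1)) :
    ∑ i ∈ Finset.range (t + 1), chainSeq c l (i + 1) = ∑ i, (l i : ℕ) := by
  rw [Finset.sum_range_succ, chainSeq_succ_of_le _ _ le_rfl, add_zero, Finset.sum_range]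
  exact Finset.sum_congr rfl fun i _ => chainSeq_succ_of_lt _ _ i.isLt

theorem sum_range_chainSeq {t K : ℕ} (c : ℕ) (l : Fin t → Fin (K + 1)) :
    ∑ i ∈ Finset.range (t + 1), chainSeq c l i = c + ∑ i, (l i : ℕ) := by
  rw [← sum_range_chainSeq_succ c l, Finset.sum_range_succ',
    Finset.sum_range_succ _ t, chainSeq_succ_of_le _ _ le_rfl, chainSeq_zero, add_zero, add_comm]

/-- The multinomial theorem, with exponents recorded by their tail sums. -/
theorem sum_pow_eq_sum_chainSeq {S : Type*} [CommSemiring S] (t : ℕ) {c K : ℕ} (hc : c ≤ K)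
    (b : ℕ → S) :
    (∑ s ∈ Finset.range (t + 1), b s) ^ c =
      ∑ u : Fin t → Fin (K + 1), ∏ s ∈ Finset.range (t + 1),
        ((chainSeq c u s).choose (chainSeq c u (s + 1)) : S) *
          b s ^ (chainSeq c u s - chainSeq c u (s + 1)) := by
  induction t generalizing c b with
  | zero => simp [chainSeq_succ_of_le]
  | succ t ih =>
    rw [← (Fin.consEquiv fun _ : Fin (t + 1) => Fin (K + 1)).sum_comp, Fintype.sum_prod_type,
      Finset.sum_range_succ', add_pow,
      Finset.sum_subset (Finset.range_subset_range.2 (Nat.succ_le_succ hc))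
        (fun j _ hj => by
          rw [Nat.choose_eq_zero_of_lt (by simpa using hj), Nat.cast_zero, mul_zero]),
      Finset.sum_range]
    refine Finset.sum_congr rfl fun v _ => ?_
    rw [ih (Nat.lt_succ_iff.1 v.isLt), Finset.sum_mul, Finset.sum_mul]
    refine Finset.sum_congr rfl fun u _ => ?_
    rw [Finset.prod_range_succ' _ (t + 1)]
    simp only [show (Fin.consEquiv fun _ : Fin (t + 1) => Fin (K + 1)) (v, u) = Fin.cons v u from rfl,
      chainSeq_cons_succ, chainSeq_zero]
    ring

theorem sum_mul_sub_succ_add {T : ℕ} {W c u : ℕ → ℕ} (hW : ∀ i, W (i + 1) = W i + c i)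
    (hu : ∀ i < T, u (i + 1) ≤ u i) :
    ∑ i ∈ Finset.range T, W i * (u i - u (i + 1)) + W T * u T =
      W 0 * u 0 + ∑ i ∈ Finset.range T, c i * u (i + 1) := by
  induction T with
  | zero => simp
  | succ T ih =>
    have := ih fun i hi => hu i (by omega)
    obtain ⟨d, hd⟩ := Nat.exists_eq_add_of_le (hu T T.lt_succ_self)
    rw [Finset.sum_range_succ, Finset.sum_range_succ, hW, ← add_assoc (W 0 * u 0), ← this, hd,
      Nat.add_sub_cancel_left]
    ring

theorem PiMat_apply {R : Type*} [CommRing R] (k t r : ℕ) (a : ℕ → R) (α β : GIdx k r t) :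
    PiMat k t r a α β = (k.factorial : R) * ∏ s ∈ Finset.range (t + 1),
      ((chainSeq k α.1 s).choose (chainSeq k β.1 (s + 1)) : R) *
        a s ^ (chainSeq k α.1 s - chainSeq k β.1 (s + 1)) := by
  have hα := α.2
  have hβ := β.2
  simp only [PiMat, Matrix.of_apply]
  generalize α.1 = α at *
  generalize β.1 = β at *
  cases t with
  | zero => simp [chainSeq_succ_of_le]
  | succ t =>
    have hA : ∀ i : Fin t, chainSeq k α (i + 1) = α i.castSucc := fun i =>
      chainSeq_succ_of_lt _ _ (by omega)
    have hB : ∀ i : Fin t, chainSeq k β (i + 1 + 1) = β i.succ := fun i =>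
      chainSeq_succ_of_lt _ _ (by omega)
    have hA' : chainSeq k α (t + 1) = α (Fin.last t) := chainSeq_succ_of_lt _ _ (by omega)
    have hB' : chainSeq k β (0 + 1) = β 0 := chainSeq_succ_of_lt _ _ (by omega)
    have hB'' : chainSeq k β (t + 1 + 1) = 0 := chainSeq_succ_of_le _ _ le_rfl
    rw [Finset.prod_range_succ, Finset.prod_range_succ', Finset.prod_range, hA', hB', hB'']
    simp only [hA, hB, chainSeq_zero]
    rw [Fin.sum_univ_castSucc] at hα
    rw [Fin.sum_univ_succ] at hβ
    have hlast : (⟨t + 1 - 1, Nat.sub_lt t.succ_pos one_pos⟩ : Fin (t + 1)) = Fin.last t := rfl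
    have hβk : (β 0 : ℕ) ≤ k := Nat.lt_succ_iff.1 (β 0).isLt
    have hαk : ∀ i, (α i : ℕ) ≤ k := fun i => Nat.lt_succ_iff.1 (α i).isLt
    rw [dif_pos t.succ_pos]
    by_cases h : ∀ i : Fin t, (β i.succ : ℕ) ≤ α i.castSucc
    · have hsum : (α (Fin.last t) : ℕ) + ∑ i : Fin t, ((α i.castSucc : ℕ) - β i.succ) = β 0 := by
        have : ∑ i : Fin t, ((α i.castSucc : ℕ) - β i.succ) + ∑ i : Fin t, (β i.succ : ℕ) =
            ∑ i : Fin t, (α i.castSucc : ℕ) := by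
          rw [← Finset.sum_add_distrib]
          exact Finset.sum_congr rfl fun i _ => Nat.sub_add_cancel (h i)
        omega
      let p : Fin (t + 1) → Fin (k + 1) :=
        Fin.snoc (fun i : Fin t => ⟨(α i.castSucc : ℕ) - β i.succ, by have := hαk i.castSucc; omega⟩)
          0
      have hp : ∀ i : Fin t, (p i.castSucc : ℕ) = (α i.castSucc : ℕ) - β i.succ := fun i => by
        simp [p]
      have hp' : (p (Fin.last t) : ℕ) = 0 := by simp [p]
      have hpsum : (∑ i, (p i : ℕ)) = ∑ i : Fin t, ((α i.castSucc : ℕ) - β i.succ) := by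
        simp [Fin.sum_univ_castSucc, hp, hp']
      rw [Finset.sum_eq_single p, if_pos, hlast, hpsum, hsum, Nat.sub_sub, hsum,
        Fin.prod_univ_castSucc, Fin.prod_univ_castSucc]
      · simp [hp, Finset.prod_mul_distrib, Nat.choose_symm (h _)]
        ring
      · refine ⟨fun i => ?_, fun i => ?_, ?_, ?_, fun i => ?_⟩
        · refine Fin.lastCases (fun hi => absurd hi (by simp)) (fun i _ => ?_) i
          rw [hp]; exact Nat.sub_le _ _
        · exact Fin.lastCases (fun _ => hp') (fun i hi => absurd hi (by simp)) i
        · rw [hlast, hpsum, hsum]; exact hβk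
        · rw [hlast, hpsum, hsum]; rfl
        · refine Fin.cases (fun hi => absurd hi (by simp)) (fun i _ => ?_) i
          change (β i.succ : ℕ) = α i.castSucc - p i.castSucc
          rw [hp, Nat.sub_sub_self (h i)]
      · rintro q - hq
        refine if_neg fun ⟨h₁, h₂, _, _, h₅⟩ => hq (funext fun i => ?_)
        refine Fin.lastCases ?_ (fun i => ?_) i <;> refine Fin.ext ?_
        · rw [hp']; exact h₂ (Fin.last t) (by simp)
        · have h₁' := h₁ i.castSucc (by simp)
          have h₅' : (β i.succ : ℕ) = α i.castSucc - q i.castSucc := h₅ i.succ (by simp)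
          rw [hp, h₅', Nat.sub_sub_self h₁']
      · simp
    · obtain ⟨i, hi⟩ := not_forall.1 h
      rw [Finset.sum_eq_zero]
      · rw [Finset.prod_eq_zero (Finset.mem_univ i)]
        · simp
        · rw [Nat.choose_eq_zero_of_lt (not_le.1 hi), Nat.cast_zero, zero_mul]
      · rintro q -
        refine if_neg fun ⟨_, _, _, _, h₅⟩ => hi ?_
        have h₅' : (β i.succ : ℕ) = α i.castSucc - q i.castSucc := h₅ i.succ (by simp)
        rw [h₅']; exact Nat.sub_le _ _
/-- The monomial matrix with entry `x ^ c i` at each position `(i, τ i)`. -/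
def weightedPermMatrix {S A : Type*} [CommRing S] [DecidableEq A] (τ : Equiv.Perm A)
    (c : A → ℕ) (x : S) : Matrix A A S :=
  Matrix.of fun i j => if j = τ i then x ^ c i else 0

theorem weightedPermMatrix_pow_apply {S A : Type*} [CommRing S] [Fintype A] [DecidableEq A]
    (τ : Equiv.Perm A) (c : A → ℕ) (x : S) (s : ℕ) (i j : A) :
    (weightedPermMatrix τ c x ^ s) i j =
      if j = (τ ^ s) i then x ^ (∑ u ∈ Finset.range s, c ((τ ^ u) i)) else 0 := by
  induction s generalizing j with
  | zero => simp [Matrix.one_apply, eq_comm]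
  | succ s ih =>
    rw [pow_succ, Matrix.mul_apply]
    simp_rw [ih, ite_mul, zero_mul]
    rw [Finset.sum_ite_eq' Finset.univ ((τ ^ s) i), if_pos (Finset.mem_univ _)]
    simp only [weightedPermMatrix, Matrix.of_apply, mul_ite, mul_zero, Finset.sum_range_succ,
      pow_add, pow_succ' τ, Equiv.Perm.mul_apply]

theorem PmatX_succ_eq_weightedPermMatrix {S : Type*} [CommRing S] (m : ℕ) (x : S) :
    PmatX (m + 1) x =
      weightedPermMatrix (finRotate (m + 1)) (fun i => if i = Fin.last m then 1 else 0) x := by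
  ext i j
  simp only [PmatX, weightedPermMatrix, Matrix.of_apply]
  refine Fin.lastCases ?_ (fun i => ?_) i
  · rw [finRotate_last, if_neg (by simp; omega)]
    simp only [Fin.val_last, Nat.add_sub_cancel, true_and, if_true, pow_one, Fin.val_eq_zero_iff]
  · rw [finRotate_apply, Fin.coeSucc_eq_succ]
    simp only [Fin.val_castSucc, Nat.add_sub_cancel, i.isLt.ne, false_and, if_false,
      (Fin.castSucc_lt_last i).ne, pow_zero, Fin.ext_iff, Fin.val_succ]

/-- Reading the entries of a family of vectors along the orbits of a permutation. -/
def orbitShear {A V : Type*} (τ : Equiv.Perm A) (t : ℕ) : (A → Fin t → V) ≃ (A → Fin t → V) where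
  toFun w ρ i := w ((τ ^ (i + 1 : ℕ)) ρ) i
  invFun u j i := u ((τ ^ (i + 1 : ℕ)).symm j) i
  left_inv w := funext fun j => funext fun i =>
    congrArg (fun j => w j i) (Equiv.apply_symm_apply (τ ^ (i + 1 : ℕ)) j)
  right_inv u := funext fun ρ => funext fun i =>
    congrArg (fun ρ => u ρ i) (Equiv.symm_apply_apply (τ ^ (i + 1 : ℕ)) ρ)

theorem chainSeq_orbitShear {A : Type*} (τ : Equiv.Perm A) {t K : ℕ} (c : ℕ)
    (w : A → Fin t → Fin (K + 1)) (ρ : A) (s : ℕ) :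
    chainSeq c (orbitShear τ t w ρ) s = chainSeq c (w ((τ ^ s) ρ)) s := by
  cases s <;> rfl

theorem sum_chainSeq_orbitShear_mul_sub {A : Type*} [Fintype A] (τ : Equiv.Perm A) {t K : ℕ}
    (k : ℕ) (w : A → Fin t → Fin (K + 1))
    (hw : ∀ j, ∀ s < t + 1, chainSeq k (w (τ j)) (s + 1) ≤ chainSeq k (w j) s) (c : A → ℕ) :
    ∑ ρ, ∑ s ∈ Finset.range (t + 1), (∑ u ∈ Finset.range s, c ((τ ^ u) ρ)) *
        (chainSeq k (w ((τ ^ s) ρ)) s - chainSeq k (w ((τ ^ (s + 1)) ρ)) (s + 1)) =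
      ∑ j, c j * ∑ i, (w (τ j) i : ℕ) := by
  have key (ρ : A) := sum_mul_sub_succ_add (T := t + 1)
    (W := fun s => ∑ u ∈ Finset.range s, c ((τ ^ u) ρ)) (c := fun s => c ((τ ^ s) ρ))
    (u := fun s => chainSeq k (w ((τ ^ s) ρ)) s) (fun s => Finset.sum_range_succ _ _)
    (fun s hs => by
      simpa only [pow_succ' τ, Equiv.Perm.mul_apply] using hw ((τ ^ s) ρ) s hs)
  simp only [chainSeq_succ_of_le _ _ le_rfl, mul_zero, add_zero, Finset.range_zero,
    Finset.sum_empty, zero_mul, zero_add] at key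
  rw [Finset.sum_congr rfl fun ρ _ => key ρ, Finset.sum_comm]
  simp_rw [← sum_range_chainSeq_succ k, Finset.mul_sum]
  rw [Finset.sum_comm (s := Finset.univ) (t := Finset.range (t + 1))]
  refine Finset.sum_congr rfl fun s _ => ?_
  rw [← Equiv.sum_comp (τ ^ s) fun j => c j * chainSeq k (w (τ j)) (s + 1)]
  simp only [pow_succ' τ, Equiv.Perm.mul_apply]

theorem sum_single_chainSeq_eq_iff {A : Type*} [Fintype A] [DecidableEq A] (τ : Equiv.Perm A)
    {t K : ℕ} (k : ℕ) (w : A → Fin t → Fin (K + 1))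
    (hw : ∀ j, ∀ s < t + 1, chainSeq k (w (τ j)) (s + 1) ≤ chainSeq k (w j) s) :
    (∑ ρ, ∑ s ∈ Finset.range (t + 1),
        (chainSeq k (w ((τ ^ s) ρ)) s - chainSeq k (w ((τ ^ (s + 1)) ρ)) (s + 1)) •
          Finsupp.single ((τ ^ s) ρ) 1 = (Finsupp.equivFunOnFinite.symm fun _ => k : A →₀ ℕ)) ↔
      ∀ j, ∑ i, (w (τ j) i : ℕ) = ∑ i, (w j i : ℕ) := by
  have h₁ : ∑ ρ, ∑ s ∈ Finset.range (t + 1),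
        (chainSeq k (w ((τ ^ s) ρ)) s - chainSeq k (w ((τ ^ (s + 1)) ρ)) (s + 1)) •
          Finsupp.single ((τ ^ s) ρ) 1 =
      (Finsupp.equivFunOnFinite.symm fun j => ∑ s ∈ Finset.range (t + 1),
        (chainSeq k (w j) s - chainSeq k (w (τ j)) (s + 1)) : A →₀ ℕ) := by
    rw [Finset.sum_comm]
    have (s : ℕ) := Equiv.sum_comp (τ ^ s) fun j =>
      (chainSeq k (w j) s - chainSeq k (w (τ j)) (s + 1)) • (Finsupp.single j 1 : A →₀ ℕ)
    simp only [pow_succ' τ, Equiv.Perm.mul_apply, this]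
    ext j
    simp only [Finsupp.finsetSum_apply, Finsupp.smul_apply, Finsupp.single_apply, smul_eq_mul,
      mul_ite, mul_one, mul_zero, Finset.sum_ite_eq', Finset.mem_univ, if_true,
      Finsupp.equivFunOnFinite_symm_apply_apply]
  rw [h₁, Finsupp.equivFunOnFinite.symm.injective.eq_iff, funext_iff]
  refine forall_congr' fun j => ?_
  have h₂ : ∑ s ∈ Finset.range (t + 1), (chainSeq k (w j) s - chainSeq k (w (τ j)) (s + 1)) +
      ∑ i, (w (τ j) i : ℕ) = k + ∑ i, (w j i : ℕ) := by
    rw [← sum_range_chainSeq k (w j), ← sum_range_chainSeq_succ k (w (τ j)), ← Finset.sum_add_distrib]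
    exact Finset.sum_congr rfl fun s hs => Nat.sub_add_cancel (hw j s (Finset.mem_range.1 hs))
  omega

theorem coeff_prod_linearForm_pow {S A : Type*} [CommRing S] [Fintype A] [DecidableEq A]
    (τ : Equiv.Perm A) (c : A → ℕ) (x : S) (k t : ℕ) (a : ℕ → S) :
    MvPolynomial.coeff (Finsupp.equivFunOnFinite.symm fun _ => k)
        (∏ i, (∑ j, MvPolynomial.monomial (Finsupp.single j 1)
          ((∑ s ∈ Finset.range (t + 1), a s • weightedPermMatrix τ c x ^ s) i j)) ^ k) =
      ∑ w : A → Fin t → Fin (k + 1),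
        if ∀ j, ∑ i, (w (τ j) i : ℕ) = ∑ i, (w j i : ℕ) then
          (∏ j, ∏ s ∈ Finset.range (t + 1),
            ((chainSeq k (w j) s).choose (chainSeq k (w (τ j)) (s + 1)) : S) *
              a s ^ (chainSeq k (w j) s - chainSeq k (w (τ j)) (s + 1))) *
            x ^ (∑ j, c j * ∑ i, (w (τ j) i : ℕ))
        else 0 := by
  have hlin : ∀ i, ∑ j, MvPolynomial.monomial (Finsupp.single j 1)
      ((∑ s ∈ Finset.range (t + 1), a s • weightedPermMatrix τ c x ^ s) i j) =
      ∑ s ∈ Finset.range (t + 1), MvPolynomial.monomial (Finsupp.single ((τ ^ s) i) 1)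
        (a s * x ^ (∑ u ∈ Finset.range s, c ((τ ^ u) i))) := by
    intro i
    simp_rw [Matrix.sum_apply, Matrix.smul_apply, weightedPermMatrix_pow_apply, map_sum]
    rw [Finset.sum_comm]
    refine Finset.sum_congr rfl fun s _ => ?_
    rw [Finset.sum_eq_single ((τ ^ s) i)]
    · simp
    · intro j _ hj
      simp [hj]
    · simp
  simp_rw [hlin, sum_pow_eq_sum_chainSeq t le_rfl, Fintype.prod_sum]
  rw [← (orbitShear τ t).sum_comp, MvPolynomial.coeff_sum]
  refine Finset.sum_congr rfl fun w _ => ?_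
  simp_rw [chainSeq_orbitShear, MvPolynomial.monomial_pow, ← map_natCast MvPolynomial.C,
    MvPolynomial.C_mul_monomial, ← MvPolynomial.monomial_sum_prod]
  rw [MvPolynomial.coeff_monomial]
  simp_rw [mul_pow, ← mul_assoc, ← pow_mul, Finset.prod_mul_distrib, Finset.prod_pow_eq_pow_sum]
  have hprod : ∏ ρ, ∏ s ∈ Finset.range (t + 1),
      (((chainSeq k (w ((τ ^ s) ρ)) s).choose
          (chainSeq k (w ((τ ^ (s + 1)) ρ)) (s + 1)) : S) *
        a s ^ (chainSeq k (w ((τ ^ s) ρ)) s - chainSeq k (w ((τ ^ (s + 1)) ρ)) (s + 1))) =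
      ∏ j, ∏ s ∈ Finset.range (t + 1),
        (((chainSeq k (w j) s).choose (chainSeq k (w (τ j)) (s + 1)) : S) *
          a s ^ (chainSeq k (w j) s - chainSeq k (w (τ j)) (s + 1))) := by
    rw [Finset.prod_comm, Finset.prod_comm (s := Finset.univ)]
    refine Finset.prod_congr rfl fun s _ => ?_
    rw [← Equiv.prod_comp (τ ^ s) fun j =>
      ((chainSeq k (w j) s).choose (chainSeq k (w (τ j)) (s + 1)) : S) *
        a s ^ (chainSeq k (w j) s - chainSeq k (w (τ j)) (s + 1))]
    simp only [pow_succ' τ, Equiv.Perm.mul_apply]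
  simp_rw [← Finset.prod_mul_distrib, hprod]
  by_cases hw : ∀ j, ∀ s < t + 1, chainSeq k (w (τ j)) (s + 1) ≤ chainSeq k (w j) s
  · simp_rw [sum_single_chainSeq_eq_iff τ k w hw, sum_chainSeq_orbitShear_mul_sub τ k w hw]
  · push Not at hw
    obtain ⟨j, s, hs, hlt⟩ := hw
    have h₀ : ∏ j, ∏ s ∈ Finset.range (t + 1),
        (((chainSeq k (w j) s).choose (chainSeq k (w (τ j)) (s + 1)) : S) *
          a s ^ (chainSeq k (w j) s - chainSeq k (w (τ j)) (s + 1))) = 0 := by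
      refine Finset.prod_eq_zero (Finset.mem_univ j)
        (Finset.prod_eq_zero (Finset.mem_range.2 hs) ?_)
      rw [Nat.choose_eq_zero_of_lt hlt, Nat.cast_zero, zero_mul]
    simp only [h₀, zero_mul, ite_self]

theorem trace_PiMat_pow_succ {R : Type*} [CommRing R] (k t r m : ℕ) (a : ℕ → R) :
    Matrix.trace (PiMat k t r a ^ (m + 1)) = (k.factorial : R) ^ (m + 1) *
      ∑ w : Fin (m + 1) → Fin t → Fin (k + 1), if ∀ j, ∑ i, (w j i : ℕ) = r then
        ∏ j, ∏ s ∈ Finset.range (t + 1),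
          ((chainSeq k (w j) s).choose (chainSeq k (w (finRotate (m + 1) j)) (s + 1)) : R) *
            a s ^ (chainSeq k (w j) s - chainSeq k (w (finRotate (m + 1) j)) (s + 1))
        else 0 := by
  rw [trace_pow_succ_eq_sum_closed_walks]
  simp_rw [PiMat_apply, Finset.prod_mul_distrib (s := (Finset.univ : Finset (Fin (m + 1)))),
    Finset.prod_const, Finset.card_univ, Fintype.card_fin, ← Finset.mul_sum]
  rw [← Finset.sum_filter]
  congr 1
  exact Finset.sum_bij' (fun w _ j => (w j).1)
    (fun w hw j => ⟨w j, (Finset.mem_filter.1 hw).2 j⟩)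
    (fun w _ => Finset.mem_filter.2 ⟨Finset.mem_univ _, fun j => (w j).2⟩)
    (fun _ _ => Finset.mem_univ _) (fun _ _ => rfl) (fun _ _ => rfl) (fun _ _ => rfl)

theorem stmt17 {R : Type*} [CommRing R] (k t n : ℕ) (hk : 1 ≤ k) (hn : 1 ≤ n)
    (a : ℕ → R) :
    sqPer ((∑ i ∈ Finset.range (t + 1),
          Polynomial.C (a i) • (PmatX n (Polynomial.X : Polynomial R)) ^ i) ⊗ₖ
        (Matrix.of fun (_ : Fin k) (_ : Fin k) => (1 : Polynomial R))) =
      ∑ r ∈ Finset.range (k * t + 1),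
        Polynomial.C (Matrix.trace ((PiMat k t r a) ^ n)) * Polynomial.X ^ r := by
  obtain ⟨m, rfl⟩ : ∃ m, n = m + 1 := ⟨n - 1, by omega⟩
  rw [sqPer_kronecker_ones, PmatX_succ_eq_weightedPermMatrix, coeff_prod_linearForm_pow,
    Fintype.card_fin]
  simp_rw [trace_PiMat_pow_succ, map_mul, map_sum, mul_assoc, ← Finset.mul_sum, Finset.sum_mul]
  rw [map_pow, map_natCast, Finset.sum_comm]
  congr 1
  refine Finset.sum_congr rfl fun w _ => ?_
  have hiff : (∀ j, ∑ i, (w (finRotate (m + 1) j) i : ℕ) = ∑ i, (w j i : ℕ)) ↔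
      ∀ j, ∑ i, (w j i : ℕ) = ∑ i, (w 0 i : ℕ) := by
    refine ⟨fun h j => ?_, fun h j => (h _).trans (h j).symm⟩
    induction j using Fin.induction with
    | zero => rfl
    | succ j ih => rw [← ih, ← h j.castSucc, finRotate_apply, Fin.coeSucc_eq_succ]
  have hmem : ∑ i, (w 0 i : ℕ) ∈ Finset.range (k * t + 1) := by
    rw [Finset.mem_range, Nat.lt_succ_iff]
    calc ∑ i, (w 0 i : ℕ) ≤ ∑ _i : Fin t, k :=
          Finset.sum_le_sum fun i _ => Nat.lt_succ_iff.1 (w 0 i).isLt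
      _ = k * t := by simp [mul_comm]
  rw [Finset.sum_eq_single_of_mem _ hmem]
  · simp only [hiff]
    split_ifs with h
    · simp [map_prod]
    · simp
  · intro r _ hr
    rw [if_neg fun h => hr (h 0).symm, map_zero, zero_mul]
end

section
/- Let t ≥ 1, let 0 ≤ s ≤ t−1 and 1 ≤ n ≤ t, and let a_0, a_1, …, a_t be independent variables over a field of characteristic 0. Then Tr( (∂/∂a_0 D_s(a_0, a_1, …, a_t)) · (D_s(a_0, a_1, …, a_t))^{n−1} ) = − Tr( (∂/∂a_n D_{s+1}(a_0, a_1, …, a_t)) · (D_{s+1}(a_0, a_1, …, a_t))^{n−1} ), where ∂/∂a_i acts entrywise on the matrix. -/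
open scoped BigOperators Classical

/-- The index set `Q_{r,t}`: strictly increasing `r`-tuples with entries in `{1, …, t}`
(encoded `0`-based, with entries in `Fin t`). -/
def QIdx (r t : ℕ) := {v : Fin r → Fin t // StrictMono v}

noncomputable instance (r t : ℕ) : Fintype (QIdx r t) := by
  unfold QIdx; infer_instance

instance (r t : ℕ) : DecidableEq (QIdx r t) := by
  unfold QIdx; infer_instance

/-- The matrix `D_r(a_0, a_1, …, a_t)`, with rows and columns indexed by `Q_{r,t}`:
`D_0(a_0) = a_0`; for `α = (i_1, …, i_r)` with `i_r < t` the `(α,β)` entry is `a_0` if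
`β = (i_1+1, …, i_r+1)`, `(−1)^j·a_{i_j}` if `β = (1, i_1+1, …, ω(i_j+1), …, i_r+1)`
(a strictly increasing tuple, identified with its set of values), and `0` otherwise;
for `i_r = t` the entry is `(−1)^r·a_t` if `β = (1, i_1+1, …, i_{r−1}+1)` and `0` otherwise. -/
noncomputable def DMat {R : Type*} [CommRing R] (t r : ℕ) (a : ℕ → R) :
    Matrix (QIdx r t) (QIdx r t) R :=
  Matrix.of fun α β =>
    if hr : 0 < r then
      (fun last : Fin r =>
        if (α.1 last).val + 1 < t then
          (if ∀ j, (β.1 j).val = (α.1 j).val + 1 then a 0 else 0) +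
            ∑ j : Fin r,
              if Finset.image (fun m => (β.1 m).val) Finset.univ =
                  insert 0 (Finset.image (fun m => (α.1 m).val + 1) (Finset.univ.erase j)) then
                (-1 : R) ^ (j.val + 1) * a ((α.1 j).val + 1)
              else 0
        else
          if Finset.image (fun m => (β.1 m).val) Finset.univ =
              insert 0 (Finset.image (fun m => (α.1 m).val + 1) (Finset.univ.erase last)) then
            (-1 : R) ^ r * a t
          else 0) ⟨r - 1, Nat.sub_lt hr one_pos⟩
    else a 0

/-- The `r`-th compound matrix of a square matrix: its entries are the `r × r` minors. -/
noncomputable def compound {R : Type*} [CommRing R] {t : ℕ} (r : ℕ)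
    (M : Matrix (Fin t) (Fin t) R) : Matrix (QIdx r t) (QIdx r t) R :=
  Matrix.of fun α β => (M.submatrix α.1 β.1).det

/-- Strictly increasing `r`-tuples correspond to `r`-element subsets. -/
noncomputable def QIdx.equivPowersetCard (r t : ℕ) :
    QIdx r t ≃ Set.powersetCard (Fin t) r :=
  { toFun := fun v => OrderEmbedding.ofStrictMono v.1 v.2
    invFun := fun f => ⟨f, f.strictMono⟩
    left_inv := fun _ => rfl
    right_inv := fun _ => rfl : QIdx r t ≃ (Fin r ↪o Fin t) }.trans
    Set.powersetCard.ofFinEmbEquiv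

lemma QIdx.equivPowersetCard_coe {r t : ℕ} (v : QIdx r t) :
    (QIdx.equivPowersetCard r t v : Finset (Fin t)) = Finset.univ.image v.1 := by
  ext i
  have := Set.powersetCard.mem_ofFinEmbEquiv_iff_mem_range
    (OrderEmbedding.ofStrictMono v.1 v.2) i
  refine this.trans ?_
  simp

lemma compound_eq_toMatrix {R : Type*} [CommRing R] {t : ℕ} (r : ℕ)
    (M : Matrix (Fin t) (Fin t) R) :
    compound r M = (LinearMap.toMatrix ((Pi.basisFun R (Fin t)).exteriorPower r)
      ((Pi.basisFun R (Fin t)).exteriorPower r) (exteriorPower.map r M.toLin')).submatrix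
        (QIdx.equivPowersetCard r t) (QIdx.equivPowersetCard r t) := by
  ext α β
  rw [Matrix.submatrix_apply, LinearMap.toMatrix_apply, exteriorPower.basis_repr_apply,
    exteriorPower.basis_apply, exteriorPower.ιMulti_family, exteriorPower.map_apply_ιMulti,
    exteriorPower.ιMultiDual_apply_ιMulti, compound, Matrix.of_apply, ← Matrix.det_transpose]
  congr 1
  ext i j
  simp [QIdx.equivPowersetCard]
  rfl

lemma compound_one {R : Type*} [CommRing R] {t : ℕ} (r : ℕ) :
    compound r (1 : Matrix (Fin t) (Fin t) R) = 1 := by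
  rw [compound_eq_toMatrix, Matrix.toLin'_one, exteriorPower.map_id, LinearMap.toMatrix_id,
    Matrix.submatrix_one_equiv]

/-- The Cauchy–Binet formula. -/
lemma compound_mul {R : Type*} [CommRing R] {t : ℕ} (r : ℕ)
    (M N : Matrix (Fin t) (Fin t) R) :
    compound r (M * N) = compound r M * compound r N := by
  simp only [compound_eq_toMatrix]
  rw [Matrix.submatrix_mul_equiv, Matrix.toLin'_mul, exteriorPower.map_comp,
    LinearMap.toMatrix_comp _ ((Pi.basisFun R (Fin t)).exteriorPower r)]

lemma compound_pow {R : Type*} [CommRing R] {t : ℕ} (r n : ℕ)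
    (M : Matrix (Fin t) (Fin t) R) :
    compound r (M ^ n) = compound r M ^ n := by
  induction n with
  | zero => simp [compound_one]
  | succ n ih => rw [pow_succ, pow_succ, compound_mul, ih]

lemma compound_neg {R : Type*} [CommRing R] {t : ℕ} (r : ℕ) (M : Matrix (Fin t) (Fin t) R) :
    compound r (-M) = (-1 : R) ^ r • compound r M := by
  ext α β
  simp only [compound, Matrix.of_apply, Matrix.smul_apply, smul_eq_mul]
  rw [Matrix.submatrix_neg]
  simpa using Matrix.det_neg (M.submatrix α.1 β.1)

open Polynomial in
lemma coeff_det_one_add_X_smul_eq_trace_compound {R : Type*} [CommRing R] {t : ℕ}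
    (M : Matrix (Fin t) (Fin t) R) (r : ℕ) :
    (Matrix.det (1 + (X : R[X]) • M.map C)).coeff r = (compound r M).trace := by
  rw [Matrix.coeff_det_one_add_X_smul_eq_sum_minors, Matrix.trace]
  symm
  refine Finset.sum_bij (fun α _ => (QIdx.equivPowersetCard r t α : Finset (Fin t))) ?_ ?_ ?_ ?_
  · intro α _
    exact Finset.mem_powersetCard.2
      ⟨Finset.subset_univ _, (QIdx.equivPowersetCard r t α).2⟩
  · intro α _ β _ h
    exact (QIdx.equivPowersetCard r t).injective (Subtype.ext h)
  · intro s hs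
    refine ⟨(QIdx.equivPowersetCard r t).symm ⟨s, (Finset.mem_powersetCard.1 hs).2⟩,
      Finset.mem_univ _, ?_⟩
    simp
  · intro α _
    have hmem : ∀ i, α.1 i ∈ (QIdx.equivPowersetCard r t α : Finset (Fin t)) := by
      simp [QIdx.equivPowersetCard_coe]
    let e : Fin r ≃ (QIdx.equivPowersetCard r t α : Finset (Fin t)) :=
      Equiv.ofBijective (fun i => ⟨α.1 i, hmem i⟩)
        ⟨fun i j h => α.2.injective (congrArg Subtype.val h), by
          rintro ⟨x, hx⟩
          rw [QIdx.equivPowersetCard_coe] at hx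
          obtain ⟨i, -, rfl⟩ := Finset.mem_image.1 hx
          exact ⟨i, rfl⟩⟩
    rw [← Matrix.det_submatrix_equiv_self e]
    rfl

lemma det_matching {R : Type*} [CommRing R] {r : ℕ} (c : R) {f g : Fin r → ℕ}
    (hf : StrictMono f) (hg : StrictMono g) :
    (Matrix.of fun i j => if g j = f i then c else 0).det =
      if ∀ j, g j = f j then c ^ r else 0 := by
  split_ifs with h
  · have : (Matrix.of fun i j => if g j = f i then c else 0) =
        Matrix.diagonal fun _ : Fin r => c := by
      ext i j
      simp [Matrix.diagonal_apply, h, hf.injective.eq_iff, eq_comm]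
    simp [this]
  · obtain ⟨i, hi⟩ : ∃ i, ∀ j, g j ≠ f i := by
      by_contra! hc
      apply h
      have hsub : Finset.univ.image f ⊆ Finset.univ.image g := by
        intro x hx
        obtain ⟨i, -, rfl⟩ := Finset.mem_image.1 hx
        obtain ⟨j, hj⟩ := hc i
        exact Finset.mem_image.2 ⟨j, Finset.mem_univ _, hj⟩
      have heq := Finset.eq_of_subset_of_card_le hsub (by
        rw [Finset.card_image_of_injective _ hf.injective,
          Finset.card_image_of_injective _ hg.injective])
      have hrange : Set.range g = Set.range f := by
        have := congrArg (fun s : Finset ℕ => (s : Set ℕ)) heq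
        simpa using this.symm
      exact congrFun ((hg.range_inj hf).1 hrange)
    exact Matrix.det_eq_zero_of_row_eq_zero i fun j => by simp [hi j]

lemma image_eq_insert_iff {m : ℕ} {α β : Fin (m + 1) → ℕ} (hα : StrictMono α)
    (hβ : StrictMono β) (j : Fin (m + 1)) :
    Finset.image β Finset.univ =
        insert 0 (Finset.image (fun i => α i + 1) (Finset.univ.erase j)) ↔
      β 0 = 0 ∧ ∀ k : Fin m, β k.succ = α (j.succAbove k) + 1 := by
  let γ : Fin (m + 1) → ℕ := Fin.cons 0 fun k => α (j.succAbove k) + 1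
  have hγ : StrictMono γ := by
    intro i k hik
    cases k using Fin.cases with
    | zero => exact absurd hik (Fin.not_lt_zero i)
    | succ k =>
      cases i using Fin.cases with
      | zero => simp [γ]
      | succ i =>
        exact Nat.succ_lt_succ <| hα <| Fin.strictMono_succAbove j <| Fin.succ_lt_succ_iff.1 hik
  have himage : insert 0 (Finset.image (fun i => α i + 1) (Finset.univ.erase j)) =
      Finset.image γ Finset.univ := by
    ext x
    have hx : x ∈ Finset.image γ Finset.univ ↔
        x = 0 ∨ ∃ k : Fin m, α (j.succAbove k) + 1 = x := by
      simp [Fin.exists_fin_succ, γ, eq_comm (a := x)]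
    simp only [hx, Finset.mem_insert, Finset.mem_image, Finset.mem_erase, Finset.mem_univ,
      and_true]
    refine or_congr Iff.rfl ⟨?_, ?_⟩
    · rintro ⟨i, hi, rfl⟩
      obtain ⟨k, rfl⟩ := Fin.exists_succAbove_eq hi
      exact ⟨k, rfl⟩
    · rintro ⟨k, rfl⟩
      exact ⟨_, Fin.succAbove_ne j k, rfl⟩
  rw [himage]
  constructor
  · intro h
    have hrange : Set.range β = Set.range γ := by
      simpa using congrArg (fun s : Finset ℕ => (s : Set ℕ)) h
    rw [(hβ.range_inj hγ).1 hrange]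
    simp [γ]
  · rintro ⟨h0, hs⟩
    congr 1
    funext i
    cases i using Fin.cases with
    | zero => simpa [γ] using h0
    | succ i => simpa [γ] using hs i

lemma DMat_zero_apply {R : Type*} [CommRing R] (t : ℕ) (a : ℕ → R) (α β : QIdx 0 t) :
    DMat t 0 a α β = a 0 := by
  simp [DMat]

lemma DMat_succ_apply {R : Type*} [CommRing R] (t m : ℕ) (a : ℕ → R) (α β : QIdx (m + 1) t) :
    DMat t (m + 1) a α β = (if ∀ j, (β.1 j).val = (α.1 j).val + 1 then a 0 else 0) +
      ∑ j : Fin (m + 1),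
        if (β.1 0).val = 0 ∧ ∀ k : Fin m, (β.1 k.succ).val = (α.1 (j.succAbove k)).val + 1 then
          (-1 : R) ^ (j.val + 1) * a ((α.1 j).val + 1) else 0 := by
  have himage := fun j => image_eq_insert_iff (α := fun i => (α.1 i).val)
    (β := fun i => (β.1 i).val) α.2 β.2 j
  have hlast : (⟨m + 1 - 1, Nat.sub_lt m.succ_pos one_pos⟩ : Fin (m + 1)) = Fin.last m := rfl
  simp only [DMat, Matrix.of_apply, Nat.succ_pos, dif_pos, himage, hlast]
  split_ifs with h1 h2 h3 h4 h5
  · rfl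
  · rfl
  · have := h4 (Fin.last m)
    have := (β.1 (Fin.last m)).2
    omega
  · have ht : (α.1 (Fin.last m)).val + 1 = t := by
      have := (α.1 (Fin.last m)).2
      omega
    rw [zero_add, Finset.sum_eq_single (Fin.last m)]
    · rw [if_pos h3, ht, Fin.val_last]
    · intro j _ hj
      rw [if_neg]
      rintro ⟨-, h⟩
      obtain ⟨k, hk⟩ := Fin.exists_succAbove_eq hj.symm
      have := h k
      have := (β.1 k.succ).2
      rw [hk] at *
      omega
    · simp
  · have := h5 (Fin.last m)
    have := (β.1 (Fin.last m)).2
    omega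
  · have ht : (α.1 (Fin.last m)).val + 1 = t := by
      have := (α.1 (Fin.last m)).2
      omega
    rw [zero_add, Finset.sum_eq_zero]
    intro j _
    rw [if_neg]
    rintro ⟨h0, h⟩
    by_cases hj : j = Fin.last m
    · subst hj
      exact h3 ⟨h0, h⟩
    · obtain ⟨k, hk⟩ := Fin.exists_succAbove_eq (Ne.symm hj)
      have := h k
      have := (β.1 k.succ).2
      rw [hk] at *
      omega

/-- The matrix of the shift `e_i ↦ a_0 e_{i+1} - a_i e_1` (indices `0`-based here). -/
def companionMatrix {R : Type*} [CommRing R] (t : ℕ) (a : ℕ → R) : Matrix (Fin t) (Fin t) R :=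
  Matrix.of fun i k =>
    if k.val = i.val + 1 then a 0 else if k.val = 0 then -a (i.val + 1) else 0

lemma smul_compound_companionMatrix {R : Type*} [CommRing R] (t r : ℕ) (a : ℕ → R) :
    a 0 • compound r (companionMatrix t a) = a 0 ^ r • DMat t r a := by
  ext α β
  cases r with
  | zero => simp [compound, DMat_zero_apply]
  | succ m =>
    have hα : StrictMono fun i => (α.1 i).val + 1 := fun i j h => Nat.succ_lt_succ (α.2 h)
    have hβ : StrictMono fun i => (β.1 i).val := β.2
    rw [Matrix.smul_apply, Matrix.smul_apply, DMat_succ_apply, smul_eq_mul, smul_eq_mul, compound,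
      Matrix.of_apply]
    by_cases h0 : (β.1 0).val = 0
    · rw [if_neg fun h => by have := h 0; omega, zero_add, Matrix.det_succ_column_zero,
        Finset.mul_sum, Finset.mul_sum]
      refine Finset.sum_congr rfl fun j _ => ?_
      have hminor : ((((companionMatrix t a).submatrix α.1 β.1).submatrix j.succAbove
          Fin.succ).det) = if ∀ k : Fin m, (β.1 k.succ).val = (α.1 (j.succAbove k)).val + 1
            then a 0 ^ m else 0 := by
        refine Eq.trans ?_ (det_matching (a 0) (hα.comp (Fin.strictMono_succAbove j))
          (hβ.comp Fin.strictMono_succ))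
        congr 1
        ext i k
        have hk : (β.1 k.succ).val ≠ 0 := by
          have := hβ (Fin.succ_pos k)
          dsimp only at this
          omega
        simp [companionMatrix, hk]
      rw [hminor]
      simp only [companionMatrix, Matrix.submatrix_apply, Matrix.of_apply, h0, true_and]
      rw [if_neg (by omega), if_pos trivial]
      split_ifs
      · ring
      · ring
    · have hmat : (companionMatrix t a).submatrix α.1 β.1 =
          Matrix.of fun i k => if (β.1 k).val = (α.1 i).val + 1 then a 0 else 0 := by
        ext i k
        have hk : (β.1 k).val ≠ 0 := by
          have := hβ.monotone (Fin.zero_le k)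
          omega
        simp [companionMatrix, hk]
      rw [hmat, det_matching (a 0) hα hβ]
      simp only [h0, false_and, if_false, Finset.sum_const_zero, add_zero]
      split_ifs
      · ring
      · ring

lemma det_one_sub_smul_companionMatrix {R : Type*} [CommRing R] (t : ℕ) (a : ℕ → R) (w : R) :
    a 0 * (1 - w • companionMatrix t a).det = ∑ k ∈ Finset.range (t + 1), a k * (a 0 * w) ^ k := by
  cases t with
  | zero => simp
  | succ m =>
    set M : Matrix (Fin (m + 1)) (Fin (m + 1)) R := 1 - w • companionMatrix (m + 1) a with hM
    have hrow : ∑ i : Fin (m + 1), (a 0 * w) ^ i.val • M i =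
        Fin.cons (1 + ∑ i : Fin (m + 1), w * a (i.val + 1) * (a 0 * w) ^ i.val) 0 := by
      funext k
      rw [Finset.sum_apply]
      cases k using Fin.cases with
      | zero =>
        have hterm : ∀ i : Fin (m + 1), ((a 0 * w) ^ i.val • M i) 0 =
            (if i = 0 then 1 else 0) + w * a (i.val + 1) * (a 0 * w) ^ i.val := by
          intro i
          simp only [hM, companionMatrix, Pi.smul_apply, Matrix.sub_apply, Matrix.smul_apply,
            Matrix.of_apply, Matrix.one_apply, smul_eq_mul, Fin.val_zero, if_true,
            if_neg (Nat.succ_ne_zero i.val).symm]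
          split_ifs with h
          · rw [h]
            simp
          · ring
        rw [Finset.sum_congr rfl fun i _ => hterm i, Finset.sum_add_distrib]
        simp
      | succ k =>
        rw [Finset.sum_eq_add (k.castSucc) (k.succ) (Fin.castSucc_lt_succ).ne]
        · simp [hM, companionMatrix, (Fin.castSucc_lt_succ (i := k)).ne]
          ring
        · rintro i - ⟨h1, h2⟩
          have h3 : k.val ≠ i.val := fun h => h1 (Fin.ext h.symm)
          simp [hM, companionMatrix, h2, h3]
        · simp
        · simp
    have hminor : (M.submatrix Fin.succ Fin.succ).det = 1 := by
      rw [Matrix.det_of_isUpperTriangular]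
      · simp [hM, companionMatrix]
      · intro i j (hij : j < i)
        have h1 : j.val ≠ i.val + 1 := by
          have : j.val < i.val := hij
          omega
        simp [hM, companionMatrix, h1, hij.ne']
    have hdet := Matrix.det_updateRow_sum M 0 fun i => (a 0 * w) ^ i.val
    rw [hrow, Matrix.det_succ_row_zero, Fin.sum_univ_succ] at hdet
    simp only [Matrix.updateRow_self, Fin.cons_zero, Fin.cons_succ, Pi.zero_apply, Fin.val_zero,
      pow_zero, one_mul, mul_zero, zero_mul, Finset.sum_const_zero, add_zero, one_smul,
      Fin.succAbove_zero] at hdet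
    have hsub : (M.updateRow 0 (Fin.cons (1 + ∑ i : Fin (m + 1),
        w * a (i.val + 1) * (a 0 * w) ^ i.val) 0)).submatrix Fin.succ Fin.succ =
        M.submatrix Fin.succ Fin.succ := by
      ext i j
      simp
    rw [hsub, hminor, mul_one] at hdet
    rw [← hdet, Finset.sum_range_succ', Finset.sum_range, mul_add, Finset.mul_sum, add_comm]
    simp only [pow_zero, pow_succ]
    congr 1
    exact Finset.sum_congr rfl fun i _ => by ring

section RootsOfUnity

open Polynomial

lemma det_one_sub_X_smul_pow_eq_expand {R : Type*} [CommRing R] {t n : ℕ}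
    (M : Matrix (Fin t) (Fin t) R) :
    (1 - ((X : R[X]) • M.map C) ^ n).det =
      expand R n (1 + (X : R[X]) • (-(M ^ n)).map C).det := by
  rw [AlgHom.map_det]
  congr 1
  have hpow : (M.map C) ^ n = (M ^ n).map (C : R →+* R[X]) := (M.map_pow C n).symm
  rw [_root_.smul_pow, hpow]
  ext1 i j
  simp only [Matrix.sub_apply, Matrix.smul_apply, Matrix.map_apply, AlgHom.mapMatrix_apply,
    Matrix.add_apply, Matrix.neg_apply, map_add, map_neg, map_mul, smul_eq_mul, expand_X, expand_C,
    Matrix.one_apply, map_one]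
  ring

/-- The polynomial `∑ a_k (μ X)^k`. -/
noncomputable def twistedPoly {A : Type*} [CommRing A] (t : ℕ) (a : ℕ → A) (μ : A) : A[X] :=
  ∑ k ∈ Finset.range (t + 1), monomial k (a k * μ ^ k)

lemma twistedPoly_comp {A : Type*} [CommRing A] (t : ℕ) (a : ℕ → A) (μ : A) :
    (twistedPoly t a μ).comp (C (a 0) * X) =
      C (a 0) * (1 - μ • (X : A[X]) • (companionMatrix t a).map C).det := by
  have hmap : (companionMatrix t a).map C = companionMatrix t fun k => C (a k) := by
    ext i j
    simp only [companionMatrix, Matrix.map_apply, Matrix.of_apply, apply_ite C, map_neg, map_zero]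
  have hsmul : μ • (X : A[X]) • (companionMatrix t a).map C =
      (C μ * X) • companionMatrix t fun k => C (a k) := by
    rw [hmap, ← smul_assoc, smul_eq_C_mul]
  rw [hsmul, twistedPoly, Polynomial.sum_comp]
  refine Eq.trans ?_ (det_one_sub_smul_companionMatrix t (fun k => C (a k)) (C μ * X)).symm
  refine Finset.sum_congr rfl fun k _ => ?_
  rw [monomial_comp, map_mul, map_pow]
  ring

/-- The extension of a derivation of `A` to `A[X]`, acting on each coefficient. -/
noncomputable def coeffDerivation {A : Type*} [CommRing A] (d : Derivation ℤ A A) :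
    Derivation ℤ A[X] A[X] :=
  PolynomialModule.equivPolynomialSelf.compDer d.mapCoeffs

lemma coeff_coeffDerivation {A : Type*} [CommRing A] (d : Derivation ℤ A A) (p : A[X])
    (k : ℕ) : (coeffDerivation d p).coeff k = d (p.coeff k) := rfl

lemma derivation_prod_eq_mul {R S ι : Type*} [CommRing R] [CommRing S] [Algebra R S]
    (d d' : Derivation R S S) (c : S) (s : Finset ι) (f : ι → S)
    (h : ∀ i ∈ s, d (f i) = c * d' (f i)) : d (∏ i ∈ s, f i) = c * d' (∏ i ∈ s, f i) := by
  induction s using Finset.cons_induction with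
  | empty => simp
  | cons i s hi ih =>
    rw [Finset.prod_cons, d.leibniz, d'.leibniz, h i (Finset.mem_cons_self i s),
      ih fun j hj => h j (Finset.mem_cons_of_mem hj)]
    simp only [smul_eq_mul]
    ring

variable {A : Type*} [CommRing A] [IsDomain A] [CharZero A]

lemma one_sub_X_pow_eq_prod {n : ℕ} (hn : 0 < n) {ζ : A} (hζ : IsPrimitiveRoot ζ n) :
    (1 - X ^ n : A[X]) = ∏ μ ∈ nthRootsFinset n (1 : A), (1 - C μ * X) := by
  refine Polynomial.funext fun y => ?_
  simpa [eval_prod] using hζ.pow_sub_pow_eq_prod_sub_mul 1 y hn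

lemma prod_det_one_sub_smul {n : ℕ} (hn : 0 < n) {ζ : A} (hζ : IsPrimitiveRoot ζ n) {S ι : Type*}
    [CommRing S] [Algebra A S] [Fintype ι] [DecidableEq ι] (Z : Matrix ι ι S) :
    ∏ μ ∈ nthRootsFinset n (1 : A), (1 - μ • Z).det = (1 - Z ^ n).det := by
  have h := congrArg (Matrix.detMonoidHom.comp (aeval (R := A) Z : A[X] →* Matrix ι ι S))
    (one_sub_X_pow_eq_prod hn hζ)
  rw [map_prod] at h
  simpa [Algebra.smul_def] using h.symm

lemma coeff_prod_twistedPoly {n : ℕ} (hn : 0 < n) {ζ : A} (hζ : IsPrimitiveRoot ζ n) (t r : ℕ)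
    (a : ℕ → A) (ha : a 0 ≠ 0) :
    (∏ μ ∈ nthRootsFinset n (1 : A), twistedPoly t a μ).coeff (r * n) =
      (-1) ^ r * (DMat t r a ^ n).trace := by
  have hcompound : a 0 ^ n * (compound r (companionMatrix t a) ^ n).trace =
      a 0 ^ (r * n) * (DMat t r a ^ n).trace := by
    have h := congrArg (fun M => (M ^ n).trace) (smul_compound_companionMatrix t r a)
    simpa [_root_.smul_pow, ← pow_mul] using h
  have hcomp : (∏ μ ∈ nthRootsFinset n (1 : A), twistedPoly t a μ).comp (C (a 0) * X) =
      C (a 0 ^ n) * expand A n (1 + (X : A[X]) • (-(companionMatrix t a ^ n)).map C).det := by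
    rw [prod_comp]
    simp only [twistedPoly_comp]
    rw [Finset.prod_mul_distrib, Finset.prod_const, hζ.card_nthRootsFinset,
      prod_det_one_sub_smul hn hζ, det_one_sub_X_smul_pow_eq_expand, C_pow]
  have hcoeff := congrArg (fun p => p.coeff (r * n)) hcomp
  simp only [comp_C_mul_X_coeff, coeff_C_mul, coeff_expand_mul hn,
    coeff_det_one_add_X_smul_eq_trace_compound, compound_neg, compound_pow, Matrix.trace_smul,
    smul_eq_mul] at hcoeff
  refine mul_right_cancel₀ (pow_ne_zero (r * n) ha) ?_
  linear_combination hcoeff + (-1) ^ r * hcompound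

lemma derivation_eq_zero_of_pow_eq_one (d : Derivation ℤ A A) {n : ℕ} (hn : 0 < n) {μ : A}
    (hμ : μ ^ n = 1) : d μ = 0 := by
  have h := d.leibniz_pow μ n
  have hμ0 : μ ≠ 0 := by
    rintro rfl
    simp [hn.ne'] at hμ
  rw [hμ, d.map_one_eq_zero] at h
  simpa [hn.ne', hμ0] using h.symm

lemma coeffDerivation_twistedPoly (d : Derivation ℤ A A) {t n i : ℕ} (hn : 0 < n) (hi : i ≤ t)
    {μ : A} (hμ : μ ^ n = 1) (a : ℕ → A) (hd : ∀ k ≤ t, d (a k) = if k = i then 1 else 0) :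
    coeffDerivation d (twistedPoly t a μ) = C (μ ^ i) * X ^ i := by
  ext m
  have hdμ : d μ = 0 := derivation_eq_zero_of_pow_eq_one d hn hμ
  rw [coeff_coeffDerivation, twistedPoly, finsetSum_coeff, map_sum, coeff_C_mul_X_pow]
  have hterm : ∀ k ∈ Finset.range (t + 1), d ((monomial k (a k * μ ^ k)).coeff m) =
      if k = i then (if m = i then μ ^ i else 0) else 0 := by
    intro k hk
    rw [coeff_monomial, apply_ite d, map_zero, d.leibniz, d.leibniz_pow, hdμ,
      hd k (Nat.lt_succ_iff.1 (Finset.mem_range.1 hk))]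
    by_cases h : k = i
    · subst h
      simp [eq_comm]
    · simp [h]
  rw [Finset.sum_congr rfl hterm, Finset.sum_ite_eq', if_pos (Finset.mem_range.2 (by omega))]

lemma derivation_trace_DMat_pow {t n : ℕ} (hn : 0 < n) (hnt : n ≤ t) {ζ : A}
    (hζ : IsPrimitiveRoot ζ n) (s : ℕ) (a : ℕ → A) (ha : a 0 ≠ 0) (d₀ dₙ : Derivation ℤ A A)
    (h₀ : ∀ k ≤ t, d₀ (a k) = if k = 0 then 1 else 0)
    (hₙ : ∀ k ≤ t, dₙ (a k) = if k = n then 1 else 0) :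
    d₀ (DMat t s a ^ n).trace = -dₙ (DMat t (s + 1) a ^ n).trace := by
  have hprod := derivation_prod_eq_mul (coeffDerivation dₙ) (coeffDerivation d₀) (X ^ n : A[X])
    (nthRootsFinset n (1 : A)) (twistedPoly t a) fun μ hμ => by
    have hμ' : μ ^ n = 1 := (mem_nthRootsFinset hn 1).1 hμ
    rw [coeffDerivation_twistedPoly dₙ hn hnt hμ' a hₙ,
      coeffDerivation_twistedPoly d₀ hn (Nat.zero_le t) hμ' a h₀]
    simp [hμ']
  have hcoeff := congrArg (fun p => p.coeff (s * n + n)) hprod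
  have hsign : ∀ (d : Derivation ℤ A A) (r : ℕ) (x : A),
      d ((-1) ^ r * x) = (-1) ^ r * d x := by
    intro d r x
    rcases neg_one_pow_eq_or A r with h | h <;> simp [h]
  have hs := coeff_prod_twistedPoly hn hζ t (s + 1) a ha
  rw [Nat.succ_mul] at hs
  simp only [coeff_X_pow_mul, coeff_coeffDerivation, hs,
    coeff_prod_twistedPoly hn hζ t s a ha, hsign] at hcoeff
  have hunit : ((-1 : A) ^ s) * (-1) ^ s = 1 := by
    rw [← mul_pow]
    simp
  linear_combination (-(-1) ^ s) * hcoeff -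
    (d₀ (DMat t s a ^ n).trace + dₙ (DMat t (s + 1) a ^ n).trace) * hunit

end RootsOfUnity

lemma derivation_map_mul {R ι : Type*} [CommRing R] [Fintype ι] (d : Derivation ℤ R R)
    (M N : Matrix ι ι R) : (M * N).map d = M.map d * N + M * N.map d := by
  ext i j
  simp only [Matrix.map_apply, Matrix.mul_apply, Matrix.add_apply, map_sum, d.leibniz,
    Finset.sum_add_distrib, smul_eq_mul]
  rw [add_comm]
  simp only [mul_comm]

lemma derivation_trace_pow {R ι : Type*} [CommRing R] [Fintype ι] [DecidableEq ι]
    (d : Derivation ℤ R R) (M : Matrix ι ι R) (n : ℕ) :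
    d (M ^ n).trace = n * (M.map d * M ^ (n - 1)).trace := by
  have hmap : ∀ k j : ℕ, ((M ^ k).map d * M ^ j).trace =
      k * (M.map d * M ^ (k + j - 1)).trace := by
    intro k
    induction k with
    | zero =>
      intro j
      have : (1 : Matrix ι ι R).map d = 0 := by
        ext i k
        simp [Matrix.one_apply, apply_ite d]
      simp [this]
    | succ k ih =>
      intro j
      rw [pow_succ, derivation_map_mul, add_mul, Matrix.trace_add, mul_assoc, ← pow_succ', ih,
        mul_assoc, Matrix.trace_mul_comm (M ^ k), mul_assoc, ← pow_add, Nat.add_right_comm k 1 j,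
        ← add_assoc, Nat.add_sub_cancel, add_comm j k]
      push_cast
      ring
  have htrace : d (M ^ n).trace = ((M ^ n).map d).trace := by
    simp [Matrix.trace, map_sum]
  simpa [htrace] using hmap n 0

lemma DMat_map {R S : Type*} [CommRing R] [CommRing S] (φ : R →+* S) (t r : ℕ) (a : ℕ → R) :
    (DMat t r a).map φ = DMat t r (φ ∘ a) := by
  ext α β
  simp only [Matrix.map_apply]
  cases r with
  | zero => simp [DMat_zero_apply]
  | succ m =>
    simp only [DMat_succ_apply, map_add, map_sum, apply_ite φ, map_mul, map_pow, map_neg, map_one,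
      map_zero, Function.comp_apply]

lemma pderiv_trace_DMat_pow {F : Type*} [Field F] [CharZero F] {t n : ℕ} (hn : 0 < n)
    (hnt : n ≤ t) (s : ℕ) (a : ℕ → MvPolynomial (Fin (t + 1)) F)
    (ha : ∀ k (hk : k < t + 1), a k = MvPolynomial.X ⟨k, hk⟩) :
    MvPolynomial.pderiv ⟨0, t.succ_pos⟩ (DMat t s a ^ n).trace =
      -MvPolynomial.pderiv ⟨n, Nat.lt_succ_of_le hnt⟩ (DMat t (s + 1) a ^ n).trace := by
  have : NeZero n := ⟨hn.ne'⟩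
  let K := CyclotomicField n F
  have : CharZero K := charZero_of_injective_algebraMap (algebraMap F K).injective
  let φ : MvPolynomial (Fin (t + 1)) F →+* MvPolynomial (Fin (t + 1)) K :=
    MvPolynomial.map (algebraMap F K)
  have hζ := (IsCyclotomicExtension.zeta_spec n F K).map_of_injective
    (MvPolynomial.C_injective (Fin (t + 1)) K)
  have htrace : ∀ r, φ (DMat t r a ^ n).trace = (DMat t r (φ ∘ a) ^ n).trace := by
    intro r
    rw [← DMat_map, ← Matrix.map_pow, AddMonoidHom.map_trace φ]
  have hX : ∀ k (hk : k < t + 1), (φ ∘ a) k = MvPolynomial.X ⟨k, hk⟩ := by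
    intro k hk
    simp [φ, ha k hk]
  have hd : ∀ i (hi : i < t + 1), ∀ k ≤ t,
      (MvPolynomial.pderiv (⟨i, hi⟩ : Fin (t + 1))).restrictScalars ℤ ((φ ∘ a) k) =
        if k = i then 1 else 0 := by
    intro i hi k hk
    rw [hX k (Nat.lt_succ_of_le hk), Derivation.restrictScalars_apply, MvPolynomial.pderiv_X]
    simp [Pi.single_apply]
  have h := derivation_trace_DMat_pow hn hnt hζ s (φ ∘ a)
    (by rw [hX 0 t.succ_pos]; exact MvPolynomial.X_ne_zero _) _ _ (hd 0 t.succ_pos)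
    (hd n (Nat.lt_succ_of_le hnt))
  refine MvPolynomial.map_injective _ (algebraMap F K).injective ?_
  rw [map_neg, ← MvPolynomial.pderiv_map, ← MvPolynomial.pderiv_map]
  change MvPolynomial.pderiv _ (φ _) = -MvPolynomial.pderiv _ (φ _)
  rw [htrace, htrace]
  exact h

theorem stmt19 (F : Type*) [Field F] [CharZero F] (t s n : ℕ) (ht : 1 ≤ t)
    (hs : s ≤ t - 1) (hn1 : 1 ≤ n) (hnt : n ≤ t) :
    Matrix.trace
        (((DMat t s (fun i =>
              if h : i ≤ t then
                  (MvPolynomial.X (⟨i, by omega⟩ : Fin (t + 1)) : MvPolynomial (Fin (t + 1)) F)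
                else 0)).map
            (fun q => MvPolynomial.pderiv (⟨0, by omega⟩ : Fin (t + 1)) q)) *
          (DMat t s (fun i =>
            if h : i ≤ t then
                (MvPolynomial.X (⟨i, by omega⟩ : Fin (t + 1)) : MvPolynomial (Fin (t + 1)) F)
              else 0)) ^ (n - 1)) =
      - Matrix.trace
        (((DMat t (s + 1) (fun i =>
              if h : i ≤ t then
                  (MvPolynomial.X (⟨i, by omega⟩ : Fin (t + 1)) : MvPolynomial (Fin (t + 1)) F)
                else 0)).map
            (fun q => MvPolynomial.pderiv (⟨n, by omega⟩ : Fin (t + 1)) q)) *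
          (DMat t (s + 1) (fun i =>
            if h : i ≤ t then
                (MvPolynomial.X (⟨i, by omega⟩ : Fin (t + 1)) : MvPolynomial (Fin (t + 1)) F)
              else 0)) ^ (n - 1)) := by
  generalize ha : (fun i => if h : i ≤ t then
    (MvPolynomial.X (⟨i, by omega⟩ : Fin (t + 1)) : MvPolynomial (Fin (t + 1)) F) else 0) = a
  have hX : ∀ k (hk : k < t + 1), a k = MvPolynomial.X ⟨k, hk⟩ := by
    intro k hk
    rw [← ha]
    exact dif_pos (Nat.le_of_lt_succ hk)
  have h := pderiv_trace_DMat_pow hn1 hnt s a hX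
  have htrace : ∀ (i : Fin (t + 1)) (r : ℕ), MvPolynomial.pderiv i (DMat t r a ^ n).trace =
      n * ((DMat t r a).map (MvPolynomial.pderiv i) * DMat t r a ^ (n - 1)).trace := fun i r =>
    derivation_trace_pow ((MvPolynomial.pderiv i).restrictScalars ℤ) (DMat t r a) n
  rw [htrace, htrace, ← mul_neg] at h
  exact mul_left_cancel₀ (Nat.cast_ne_zero.2 (Nat.one_le_iff_ne_zero.1 hn1)) h
end
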